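/- arXiv:2310.11455 — 4 statements merged into one kernel-verified Lean document; each statement's English description precedes it below -/
import Mathlib

section
/- Let ε ∈ (0, 1/2) and let η₀, η₁ : [0,1] → ℂ be regular simple curves such that η₀ = η₁ on [0, ε] and on [1−ε, 1], and such that there exists a continuous map H : [0,1] × [ε, 1−ε] → ℂ with H(0,·) = η₀ restricted to [ε, 1−ε], H(1,·) = η₁ restricted to [ε, 1−ε], H(s, ε) = η₀(ε) and H(s, 1−ε) = η₀(1−ε) for all s ∈ [0,1], and H(s, t) ∉ η₀([0, ε]) ∪ η₀([1−ε, 1]) for all s ∈ [0,1] and all t ∈ (ε, 1−ε). Then the total curvatures of η₀ and η₁ agree: if θ₀ is an argument lift of η₀′ and θ₁ is an argument lift of η₁′, then θ₀(1) − θ₀(0) = θ₁(1) − θ₁(0). -/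
/-- The derivative of a curve `η : [0,1] → ℂ`, taken within `[0,1]`. -/
noncomputable def curveDeriv (η : ℝ → ℂ) : ℝ → ℂ :=
  fun t => derivWithin η (Set.Icc 0 1) t

/-- A regular curve: continuously differentiable on `[0,1]` with nonvanishing derivative. -/
def IsRegularCurve (η : ℝ → ℂ) : Prop :=
  ContDiffOn ℝ 1 η (Set.Icc 0 1) ∧ ∀ t ∈ Set.Icc (0 : ℝ) 1, curveDeriv η t ≠ 0

/-- A regular simple curve: an injective regular curve. -/
def IsRegularSimpleCurve (η : ℝ → ℂ) : Prop :=
  IsRegularCurve η ∧ Set.InjOn η (Set.Icc 0 1)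

/-- `θ` is an argument lift of the nowhere-vanishing function `g` on `[0,1]`:
`θ` is continuous and `g(t)·exp(−i·θ(t))` is a positive real number for all `t`. -/
def IsArgLift (g : ℝ → ℂ) (θ : ℝ → ℝ) : Prop :=
  ContinuousOn θ (Set.Icc 0 1) ∧
    ∀ t ∈ Set.Icc (0 : ℝ) 1, ∃ r : ℝ, 0 < r ∧
      g t * Complex.exp (-(θ t : ℂ) * Complex.I) = (r : ℂ)

/-!
Hopf's secant argument. For a regular simple curve the secant slope `(η t - η s) / (t - s)`,
completed by `η' t` on the diagonal, is continuous and nowhere zero on the square `[0,1]²`, hence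
has a continuous logarithm there. The total curvature is the change of argument along the diagonal,
and so also the change of argument from `(0,0)` to `(0,1)` to `(1,1)`. Along these two sides one end
of the secant is fixed at `η 0`, resp. `η 1`, and a homotopy of the middle part of the curve that
avoids this point carries the secant slopes along without letting them vanish.
-/

open Set
open scoped Topology

section ContinuousLog

/-- `l` is a continuous branch of the logarithm of `f` on `s`. The change of argument of `f` between
two points is the imaginary part of the increment of `l`. -/
structure IsContinuousLogOn {X : Type*} [TopologicalSpace X] (l f : X → ℂ) (s : Set X) : Prop where
  continuousOn : ContinuousOn l s
  exp_eq : ∀ x ∈ s, Complex.exp (l x) = f x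

variable {X Y : Type*} [TopologicalSpace X] [TopologicalSpace Y]
  {l m f g : X → ℂ} {s t : Set X} {x y : X}

namespace IsContinuousLogOn

theorem mono (hl : IsContinuousLogOn l f s) (hts : t ⊆ s) : IsContinuousLogOn l f t :=
  ⟨hl.continuousOn.mono hts, fun x hx => hl.exp_eq x (hts hx)⟩

theorem congr (hl : IsContinuousLogOn l f s) (hfg : EqOn f g s) : IsContinuousLogOn l g s :=
  ⟨hl.continuousOn, fun x hx => (hl.exp_eq x hx).trans (hfg hx)⟩

theorem comp {φ : Y → X} {u : Set Y} (hl : IsContinuousLogOn l f s) (hφ : ContinuousOn φ u)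
    (hmaps : MapsTo φ u s) : IsContinuousLogOn (l ∘ φ) (f ∘ φ) u :=
  ⟨hl.continuousOn.comp hφ hmaps, fun x hx => hl.exp_eq (φ x) (hmaps hx)⟩

theorem sub_eq_sub (hl : IsContinuousLogOn l f s) (hm : IsContinuousLogOn m f s)
    (hs : IsPreconnected s) (hx : x ∈ s) (hy : y ∈ s) : l y - l x = m y - m x := by
  have exp_shift : Complex.exp (m x - l x) = 1 := by
    rw [Complex.exp_sub, hl.exp_eq x hx, hm.exp_eq x hx,
      div_self (hl.exp_eq x hx ▸ Complex.exp_ne_zero _)]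
  have shifted_eq : EqOn (fun z => l z + (m x - l x)) m s :=
    Complex.isCoveringMap_exp.eqOn_of_comp_eqOn hs (hl.continuousOn.add continuousOn_const)
      hm.continuousOn
      (fun z hz => Subtype.ext <| by
        simp [Complex.exp_add, exp_shift, hl.exp_eq z hz, hm.exp_eq z hz])
      hx (add_sub_cancel _ _)
  linear_combination shifted_eq hy

theorem eq_of_forall_eq (hl : IsContinuousLogOn l f s) (hs : IsPreconnected s)
    (hf : ∀ z ∈ s, f z = f x) (hx : x ∈ s) (hy : y ∈ s) : l y = l x := by
  have const_log : IsContinuousLogOn (fun _ => l x) f s :=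
    ⟨continuousOn_const, fun z hz => (hl.exp_eq x hx).trans (hf z hz).symm⟩
  simpa [sub_eq_zero] using hl.sub_eq_sub const_log hs hx hy

end IsContinuousLogOn

theorem exists_isContinuousLogOn_of_convex {E : Type*} [AddCommGroup E] [Module ℝ E]
    [TopologicalSpace E] [IsTopologicalAddGroup E] [ContinuousSMul ℝ E] [LocallyConvexSpace ℝ E]
    {S : Set E} {f : E → ℂ} (hS : Convex ℝ S) (hf : ContinuousOn f S) (hf0 : ∀ x ∈ S, f x ≠ 0) :
    ∃ l, IsContinuousLogOn l f S := by
  rcases S.eq_empty_or_nonempty with rfl | hne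
  · exact ⟨0, continuousOn_empty _, fun x hx => hx.elim⟩
  have := hS.contractibleSpace hne
  have := hS.locallyPathConnectedSpace
  have := (Homeomorph.Set.univ S).contractibleSpace
  have univ_simplyConnected : IsSimplyConnected (univ : Set S) :=
    SimplyConnectedSpace.ofContractible _
  obtain ⟨l, l_cont, exp_l⟩ := Complex.exists_continuousOn_eqOn_exp_comp univ_simplyConnected
    isOpen_univ (continuousOn_iff_continuous_domRestrict.1 hf).continuousOn (by simpa using hf0)
  have extend_l : S.domRestrict (Function.extend Subtype.val l 0) = l :=
    funext fun x => Subtype.val_injective.extend_apply l 0 x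
  refine ⟨Function.extend Subtype.val l 0, ?_, fun x hx => ?_⟩
  · rwa [continuousOn_iff_continuous_domRestrict, extend_l, ← continuousOn_univ]
  · exact (congrArg Complex.exp (congrFun extend_l ⟨x, hx⟩)).trans
      (exp_l (mem_univ (⟨x, hx⟩ : S)))

theorem IsArgLift.sub_eq_im_sub {g l : ℝ → ℂ} {θ : ℝ → ℝ} (hθ : IsArgLift g θ)
    (hl : IsContinuousLogOn l g (Icc 0 1)) : θ 1 - θ 0 = (l 1 - l 0).im := by
  have polar_log : IsContinuousLogOn (fun t => ((l t).re : ℂ) + θ t * Complex.I) g (Icc 0 1) := by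
    refine ⟨?_, fun t ht => ?_⟩
    · have := hl.continuousOn
      have := hθ.1
      fun_prop
    · obtain ⟨r, r_pos, hr⟩ := hθ.2 t ht
      have g_eq : g t = r * Complex.exp (θ t * Complex.I) := by
        rw [← hr, mul_assoc, ← Complex.exp_add]
        simp
      have norm_eq : Real.exp (l t).re = r := by
        rw [← Complex.norm_exp, hl.exp_eq t ht, g_eq, norm_mul, Complex.norm_exp_ofReal_mul_I,
          mul_one, Complex.norm_of_nonneg r_pos.le]
      rw [Complex.exp_add, ← Complex.ofReal_exp, norm_eq, g_eq]
  rw [hl.sub_eq_sub polar_log isPreconnected_Icc (left_mem_Icc.2 zero_le_one)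
    (right_mem_Icc.2 zero_le_one)]
  simp

end ContinuousLog

section Homotopy

/-- `H` is a homotopy from `f₀` to `f₁` on `[a, b]` relative to the endpoints. The homotopy
parameter is the first coordinate and ranges over `[0, 1]`; values of `H` outside
`[0, 1] × [a, b]` are irrelevant. -/
structure IsHomotopyRelEndpoints {X : Type*} [TopologicalSpace X] (H : ℝ × ℝ → X) (f₀ f₁ : ℝ → X)
    (a b : ℝ) : Prop where
  continuousOn : ContinuousOn H (Icc 0 1 ×ˢ Icc a b)
  map_zero : ∀ t ∈ Icc a b, H (0, t) = f₀ t
  map_one : ∀ t ∈ Icc a b, H (1, t) = f₁ t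
  map_left : ∀ s ∈ Icc (0 : ℝ) 1, H (s, a) = f₀ a
  map_right : ∀ s ∈ Icc (0 : ℝ) 1, H (s, b) = f₀ b

theorem IsHomotopyRelEndpoints.ne_of_forall_Ioo_ne {X : Type*} [TopologicalSpace X]
    {H : ℝ × ℝ → X} {f₀ f₁ : ℝ → X} {a b : ℝ} {p : X} (hH : IsHomotopyRelEndpoints H f₀ f₁ a b)
    (ha : f₀ a ≠ p) (hb : f₀ b ≠ p) (hp : ∀ s ∈ Icc (0 : ℝ) 1, ∀ t ∈ Ioo a b, H (s, t) ≠ p) :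
    ∀ x ∈ Icc (0 : ℝ) 1 ×ˢ Icc a b, H x ≠ p := by
  rintro ⟨s, t⟩ ⟨hs, ht⟩
  rcases eq_endpoints_or_mem_Ioo_of_mem_Icc ht with rfl | rfl | ht
  · rwa [hH.map_left s hs]
  · rwa [hH.map_right s hs]
  · exact hp s hs t ht

variable {l₀ l₁ f₀ f₁ : ℝ → ℂ} {K : ℝ × ℝ → ℂ} {a b x y : ℝ}

theorem IsContinuousLogOn.sub_eq_sub_of_homotopy (hab : a ≤ b)
    (hl₀ : IsContinuousLogOn l₀ f₀ (Icc a b)) (hl₁ : IsContinuousLogOn l₁ f₁ (Icc a b))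
    (hK : IsHomotopyRelEndpoints K f₀ f₁ a b) (hK0 : ∀ x ∈ Icc (0 : ℝ) 1 ×ˢ Icc a b, K x ≠ 0) :
    l₀ b - l₀ a = l₁ b - l₁ a := by
  obtain ⟨L, hL⟩ := exists_isContinuousLogOn_of_convex
    ((convex_Icc 0 1).prod (convex_Icc a b)) hK.continuousOn hK0
  have zero_mem : (0 : ℝ) ∈ Icc (0 : ℝ) 1 := left_mem_Icc.2 zero_le_one
  have one_mem : (1 : ℝ) ∈ Icc (0 : ℝ) 1 := right_mem_Icc.2 zero_le_one
  have a_mem : a ∈ Icc a b := left_mem_Icc.2 hab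
  have b_mem : b ∈ Icc a b := right_mem_Icc.2 hab
  have initial : L (0, b) - L (0, a) = l₀ b - l₀ a :=
    ((hL.comp (φ := fun t => (0, t)) (by fun_prop) fun t ht => ⟨zero_mem, ht⟩).congr
      hK.map_zero).sub_eq_sub hl₀ isPreconnected_Icc a_mem b_mem
  have final : L (1, b) - L (1, a) = l₁ b - l₁ a :=
    ((hL.comp (φ := fun t => (1, t)) (by fun_prop) fun t ht => ⟨one_mem, ht⟩).congr
      hK.map_one).sub_eq_sub hl₁ isPreconnected_Icc a_mem b_mem
  have left : L (1, a) = L (0, a) :=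
    (hL.comp (φ := fun s => (s, a)) (by fun_prop) fun s hs => ⟨hs, a_mem⟩).eq_of_forall_eq
      isPreconnected_Icc
      (fun s hs => (hK.map_left s hs).trans (hK.map_left 0 zero_mem).symm) zero_mem one_mem
  have right : L (1, b) = L (0, b) :=
    (hL.comp (φ := fun s => (s, b)) (by fun_prop) fun s hs => ⟨hs, b_mem⟩).eq_of_forall_eq
      isPreconnected_Icc
      (fun s hs => (hK.map_right s hs).trans (hK.map_right 0 zero_mem).symm) zero_mem one_mem
  rw [← initial, ← final, left, right]

theorem IsContinuousLogOn.sub_eq_sub_of_homotopy_of_eqOn (hxa : x ≤ a) (hab : a ≤ b) (hby : b ≤ y)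
    (hl₀ : IsContinuousLogOn l₀ f₀ (Icc x y)) (hl₁ : IsContinuousLogOn l₁ f₁ (Icc x y))
    (hf : EqOn f₀ f₁ (Icc x y \ Ioo a b)) (hK : IsHomotopyRelEndpoints K f₀ f₁ a b)
    (hK0 : ∀ x ∈ Icc (0 : ℝ) 1 ×ˢ Icc a b, K x ≠ 0) :
    l₀ y - l₀ x = l₁ y - l₁ x := by
  have initial_subset : Icc x a ⊆ Icc x y \ Ioo a b := fun t ht =>
    ⟨⟨ht.1, ht.2.trans (hab.trans hby)⟩, fun h => h.1.not_ge ht.2⟩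
  have final_subset : Icc b y ⊆ Icc x y \ Ioo a b := fun t ht =>
    ⟨⟨(hxa.trans hab).trans ht.1, ht.2⟩, fun h => h.2.not_ge ht.1⟩
  have initial : l₀ a - l₀ x = l₁ a - l₁ x :=
    ((hl₀.mono (initial_subset.trans sdiff_subset)).congr (hf.mono initial_subset)).sub_eq_sub
      (hl₁.mono (initial_subset.trans sdiff_subset)) isPreconnected_Icc
      (left_mem_Icc.2 hxa) (right_mem_Icc.2 hxa)
  have middle : l₀ b - l₀ a = l₁ b - l₁ a :=
    (hl₀.mono (Icc_subset_Icc hxa hby)).sub_eq_sub_of_homotopy hab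
      (hl₁.mono (Icc_subset_Icc hxa hby)) hK hK0
  have final : l₀ y - l₀ b = l₁ y - l₁ b :=
    ((hl₀.mono (final_subset.trans sdiff_subset)).congr (hf.mono final_subset)).sub_eq_sub
      (hl₁.mono (final_subset.trans sdiff_subset)) isPreconnected_Icc
      (left_mem_Icc.2 hby) (right_mem_Icc.2 hby)
  linear_combination initial + middle + final

end Homotopy

section SecantSlope

section NontriviallyNormedField

variable {𝕜 E : Type*} [NontriviallyNormedField 𝕜] [NormedAddCommGroup E] [NormedSpace 𝕜 E]
  {f g : 𝕜 → E} {S : Set 𝕜} {a b : 𝕜}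

/-- The secant slope of `f` between `a` and another point, completed at `a` by the derivative of `f`
within `S`. This is `dslope` for functions that are differentiable only within a set. -/
noncomputable def dslopeWithin (f : 𝕜 → E) (S : Set 𝕜) (a : 𝕜) : 𝕜 → E :=
  open Classical in Function.update (slope f a) a (derivWithin f S a)

theorem dslopeWithin_same (f : 𝕜 → E) (S : Set 𝕜) (a : 𝕜) :
    dslopeWithin f S a a = derivWithin f S a := by
  classical exact Function.update_self ..

theorem dslopeWithin_of_ne (f : 𝕜 → E) (S : Set 𝕜) (h : b ≠ a) :
    dslopeWithin f S a b = slope f a b := by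
  classical exact Function.update_of_ne h ..

theorem dslopeWithin_comm (f : 𝕜 → E) (S : Set 𝕜) (a b : 𝕜) :
    dslopeWithin f S a b = dslopeWithin f S b a := by
  rcases eq_or_ne a b with rfl | hne
  · rfl
  · rw [dslopeWithin_of_ne f S hne.symm, dslopeWithin_of_ne f S hne, slope_comm]

theorem dslopeWithin_ne_zero (hinj : InjOn f S) (hderiv : ∀ x ∈ S, derivWithin f S x ≠ 0)
    (ha : a ∈ S) (hb : b ∈ S) : dslopeWithin f S a b ≠ 0 := by
  rcases eq_or_ne b a with rfl | hne
  · rw [dslopeWithin_same]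
    exact hderiv b hb
  · rw [dslopeWithin_of_ne f S hne]
    exact fun h => hne (hinj hb ha (eq_of_slope_eq_zero h).symm)

theorem dslopeWithin_eq_of_eventuallyEq (hfg : f =ᶠ[𝓝[S] a] g) (ha : a ∈ S) (hb : f b = g b) :
    dslopeWithin f S a b = dslopeWithin g S a b := by
  have hfa : f a = g a := hfg.eq_of_nhdsWithin ha
  rcases eq_or_ne b a with rfl | hne
  · rw [dslopeWithin_same, dslopeWithin_same, hfg.derivWithin_eq hfa]
  · rw [dslopeWithin_of_ne f S hne, dslopeWithin_of_ne g S hne, slope, slope, hfa, hb]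

end NontriviallyNormedField

variable {E : Type*} [NormedAddCommGroup E] [NormedSpace ℝ E]

theorem integral_derivWithin_of_mem_Icc [CompleteSpace E] {f : ℝ → E} {a b s t : ℝ} (hab : a < b)
    (hf : ContDiffOn ℝ 1 f (Icc a b)) (hs : s ∈ Icc a b) (ht : t ∈ Icc a b) :
    ∫ u in s..t, derivWithin f (Icc a b) u = f t - f s := by
  have uIcc_subset : uIcc s t ⊆ Icc a b := uIcc_subset_Icc hs ht
  refine intervalIntegral.integral_eq_sub_of_hasDeriv_right (hf.continuousOn.mono uIcc_subset)
    (fun u hu => ?_) ?_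
  · have hu' : u ∈ Ioo a b := Ioo_subset_Ioo (le_min hs.1 ht.1) (max_le hs.2 ht.2) hu
    exact ((hf.differentiableOn one_ne_zero u (Ioo_subset_Icc_self hu')).hasDerivWithinAt.hasDerivAt
      (Icc_mem_nhds hu'.1 hu'.2)).hasDerivWithinAt
  · exact ((hf.continuousOn_derivWithin (uniqueDiffOn_Icc hab) le_rfl).mono
      uIcc_subset).intervalIntegrable

theorem dslopeWithin_eq_integral [CompleteSpace E] {f : ℝ → E} {a b s t : ℝ} (hab : a < b)
    (hf : ContDiffOn ℝ 1 f (Icc a b)) (hs : s ∈ Icc a b) (ht : t ∈ Icc a b) :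
    dslopeWithin f (Icc a b) s t =
      ∫ u in (0 : ℝ)..1, derivWithin f (Icc a b) (s + (t - s) * u) := by
  rcases eq_or_ne t s with rfl | hne
  · simp [dslopeWithin_same]
  · rw [dslopeWithin_of_ne f _ hne, intervalIntegral.integral_comp_add_mul _ (sub_ne_zero.2 hne)]
    simp [integral_derivWithin_of_mem_Icc hab hf hs ht, slope_def_module]

theorem continuousOn_dslopeWithin_Icc [CompleteSpace E] {f : ℝ → E} {a b : ℝ} (hab : a < b)
    (hf : ContDiffOn ℝ 1 f (Icc a b)) :
    ContinuousOn (fun p : ℝ × ℝ => dslopeWithin f (Icc a b) p.1 p.2) (Icc a b ×ˢ Icc a b) := by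
  let D : ℝ → E := fun t => derivWithin f (Icc a b) (projIcc a b hab.le t)
  have D_cont : Continuous D :=
    (hf.continuousOn_derivWithin (uniqueDiffOn_Icc hab) le_rfl).comp_continuous
      (continuous_subtype_val.comp continuous_projIcc) fun t => (projIcc a b hab.le t).2
  have integral_cont : Continuous fun p : ℝ × ℝ => ∫ u in (0 : ℝ)..1, D (p.1 + (p.2 - p.1) * u) :=
    intervalIntegral.continuous_parametric_intervalIntegral_of_continuous' (by fun_prop) _ _
  refine integral_cont.continuousOn.congr ?_
  rintro ⟨s, t⟩ ⟨hs, ht⟩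
  refine (dslopeWithin_eq_integral hab hf hs ht).trans
    (intervalIntegral.integral_congr fun u hu => ?_)
  rw [uIcc_of_le zero_le_one] at hu
  have mem : s + (t - s) * u ∈ Icc a b := by
    have := (convex_Icc a b).add_smul_sub_mem hs ht hu
    rwa [smul_eq_mul, mul_comm] at this
  simp [D, projIcc_of_mem hab.le mem]

theorem IsHomotopyRelEndpoints.dslopeWithin_of_notMem {f₀ f₁ : ℝ → E} {H : ℝ × ℝ → E} {a b c : ℝ}
    (hH : IsHomotopyRelEndpoints H f₀ f₁ a b) (hab : a ≤ b) (hc : c ∉ Icc a b) (hfc : f₀ c = f₁ c)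
    (S : Set ℝ) :
    IsHomotopyRelEndpoints (fun x => (x.2 - c)⁻¹ • (H x - f₀ c))
      (dslopeWithin f₀ S c) (dslopeWithin f₁ S c) a b := by
  have ne_c : ∀ t ∈ Icc a b, t ≠ c := fun t ht => ne_of_mem_of_not_mem ht hc
  have dslope_eq (f : ℝ → E) {t : ℝ} (ht : t ∈ Icc a b) :
      dslopeWithin f S c t = (t - c)⁻¹ • (f t - f c) :=
    dslopeWithin_of_ne f S (ne_c t ht)
  refine ⟨?_, fun t ht => ?_, fun t ht => ?_, fun s hs => ?_, fun s hs => ?_⟩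
  · exact ((continuousOn_snd.sub continuousOn_const).inv₀ fun x hx =>
      sub_ne_zero.2 (ne_c x.2 hx.2)).smul (hH.continuousOn.sub continuousOn_const)
  · rw [dslope_eq f₀ ht, hH.map_zero t ht]
  · rw [dslope_eq f₁ ht, hH.map_one t ht, hfc]
  · rw [dslope_eq f₀ (left_mem_Icc.2 hab), hH.map_left s hs]
  · rw [dslope_eq f₀ (right_mem_Icc.2 hab), hH.map_right s hs]

theorem IsContinuousLogOn.sub_eq_sub_of_dslopeWithin_of_homotopy {f₀ f₁ l₀ l₁ : ℝ → ℂ}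
    {H : ℝ × ℝ → ℂ} {a b c x y : ℝ} (hxa : x ≤ a) (hab : a ≤ b) (hby : b ≤ y)
    (hc : c ∈ Icc x y \ Icc a b)
    (hl₀ : IsContinuousLogOn l₀ (dslopeWithin f₀ (Icc x y) c) (Icc x y))
    (hl₁ : IsContinuousLogOn l₁ (dslopeWithin f₁ (Icc x y) c) (Icc x y))
    (hinj : InjOn f₀ (Icc x y)) (hf : EqOn f₀ f₁ (Icc x y \ Ioo a b))
    (hH : IsHomotopyRelEndpoints H f₀ f₁ a b)
    (havoid : ∀ s ∈ Icc (0 : ℝ) 1, ∀ t ∈ Ioo a b, H (s, t) ≠ f₀ c) :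
    l₀ y - l₀ x = l₁ y - l₁ x := by
  have eq_near : f₀ =ᶠ[𝓝[Icc x y] c] f₁ := by
    filter_upwards [self_mem_nhdsWithin,
      mem_nhdsWithin_of_mem_nhds (isClosed_Icc.isOpen_compl.mem_nhds hc.2)] with t ht ht'
    exact hf ⟨ht, fun h => ht' (Ioo_subset_Icc_self h)⟩
  have ne_base : ∀ t ∈ Icc a b, f₀ t ≠ f₀ c := fun t ht =>
    hinj.ne (Icc_subset_Icc hxa hby ht) hc.1 (ne_of_mem_of_not_mem ht hc.2)
  have avoid_base : ∀ p ∈ Icc (0 : ℝ) 1 ×ˢ Icc a b, H p ≠ f₀ c :=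
    hH.ne_of_forall_Ioo_ne (ne_base a (left_mem_Icc.2 hab)) (ne_base b (right_mem_Icc.2 hab)) havoid
  refine hl₀.sub_eq_sub_of_homotopy_of_eqOn hxa hab hby hl₁
    (fun t ht => dslopeWithin_eq_of_eventuallyEq eq_near hc.1 (hf ht))
    (hH.dslopeWithin_of_notMem hab hc.2 (eq_near.eq_of_nhdsWithin hc.1) (Icc x y))
    fun p hp => smul_ne_zero (inv_ne_zero (sub_ne_zero.2 ?_)) (sub_ne_zero.2 (avoid_base p hp))
  exact ne_of_mem_of_not_mem hp.2 hc.2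

end SecantSlope

section TotalCurvature

variable {η η₀ η₁ : ℝ → ℂ} {θ θ₀ θ₁ : ℝ → ℝ} {H : ℝ × ℝ → ℂ} {a b : ℝ}

theorem IsRegularSimpleCurve.exists_isContinuousLogOn_dslopeWithin (hη : IsRegularSimpleCurve η) :
    ∃ L, IsContinuousLogOn L (fun p : ℝ × ℝ => dslopeWithin η (Icc 0 1) p.1 p.2)
      (Icc 0 1 ×ˢ Icc 0 1) :=
  exists_isContinuousLogOn_of_convex ((convex_Icc 0 1).prod (convex_Icc 0 1))
    (continuousOn_dslopeWithin_Icc zero_lt_one hη.1.1)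
    fun _ hp => dslopeWithin_ne_zero hη.2 hη.1.2 hp.1 hp.2

theorem IsRegularSimpleCurve.exists_totalCurvature_eq_im_add_im (hη : IsRegularSimpleCurve η)
    (hθ : IsArgLift (curveDeriv η) θ) :
    ∃ l m, IsContinuousLogOn l (dslopeWithin η (Icc 0 1) 0) (Icc 0 1) ∧
      IsContinuousLogOn m (dslopeWithin η (Icc 0 1) 1) (Icc 0 1) ∧
      θ 1 - θ 0 = (l 1 - l 0).im + (m 1 - m 0).im := by
  obtain ⟨L, hL⟩ := hη.exists_isContinuousLogOn_dslopeWithin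
  have diagonal : IsContinuousLogOn (fun t => L (t, t)) (curveDeriv η) (Icc 0 1) :=
    (hL.comp (φ := fun t => (t, t)) (by fun_prop) fun t ht => ⟨ht, ht⟩).congr
      fun t _ => dslopeWithin_same η (Icc 0 1) t
  refine ⟨fun t => L (0, t), fun t => L (t, 1), ?_, ?_, ?_⟩
  · exact hL.comp (φ := fun t => (0, t)) (by fun_prop) fun t ht => ⟨left_mem_Icc.2 zero_le_one, ht⟩
  · exact (hL.comp (φ := fun t => (t, 1)) (by fun_prop) fun t ht =>
      ⟨ht, right_mem_Icc.2 zero_le_one⟩).congr fun t _ => dslopeWithin_comm η (Icc 0 1) t 1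
  · rw [hθ.sub_eq_im_sub diagonal, ← Complex.add_im]
    ring_nf

theorem totalCurvature_eq_of_homotopic_general (ha : 0 < a) (hab : a ≤ b) (hb : b < 1)
    (h₀ : IsRegularSimpleCurve η₀) (h₁ : IsRegularSimpleCurve η₁)
    (hleft : EqOn η₀ η₁ (Icc 0 a)) (hright : EqOn η₀ η₁ (Icc b 1))
    (hH : IsHomotopyRelEndpoints H η₀ η₁ a b)
    (havoid : ∀ s ∈ Icc (0 : ℝ) 1, ∀ t ∈ Ioo a b, H (s, t) ≠ η₀ 0 ∧ H (s, t) ≠ η₀ 1)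
    (hθ₀ : IsArgLift (curveDeriv η₀) θ₀) (hθ₁ : IsArgLift (curveDeriv η₁) θ₁) :
    θ₀ 1 - θ₀ 0 = θ₁ 1 - θ₁ 0 := by
  obtain ⟨l₀, m₀, hl₀, hm₀, curvature₀⟩ := h₀.exists_totalCurvature_eq_im_add_im hθ₀
  obtain ⟨l₁, m₁, hl₁, hm₁, curvature₁⟩ := h₁.exists_totalCurvature_eq_im_add_im hθ₁
  have ends_eq : EqOn η₀ η₁ (Icc 0 1 \ Ioo a b) := fun t ht =>
    (le_or_gt t a).elim (fun hta => hleft ⟨ht.1.1, hta⟩)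
      fun hat => hright ⟨not_lt.1 fun htb => ht.2 ⟨hat, htb⟩, ht.1.2⟩
  have secants_from_start : l₀ 1 - l₀ 0 = l₁ 1 - l₁ 0 :=
    hl₀.sub_eq_sub_of_dslopeWithin_of_homotopy ha.le hab hb.le
      ⟨left_mem_Icc.2 zero_le_one, fun h => ha.not_ge h.1⟩ hl₁ h₀.2 ends_eq hH
      fun s hs t ht => (havoid s hs t ht).1
  have secants_to_end : m₀ 1 - m₀ 0 = m₁ 1 - m₁ 0 :=
    hm₀.sub_eq_sub_of_dslopeWithin_of_homotopy ha.le hab hb.le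
      ⟨right_mem_Icc.2 zero_le_one, fun h => hb.not_ge h.2⟩ hm₁ h₀.2 ends_eq hH
      fun s hs t ht => (havoid s hs t ht).2
  rw [curvature₀, curvature₁, secants_from_start, secants_to_end]

end TotalCurvature

/-- **Homotopy invariance of total curvature (Lemma 2.6).**
If `η₀, η₁` are regular simple curves agreeing on `[0, ε]` and `[1−ε, 1]`, whose middle
parts are homotopic in the twice-slitted plane
`ℂ \ (η₀([0,ε]) ∪ η₀([1−ε,1]))` (rel endpoints), then they have the same total
curvature. -/
theorem totalCurvature_eq_of_homotopic
    (ε : ℝ) (hε : ε ∈ Set.Ioo (0 : ℝ) (1 / 2))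
    (η₀ η₁ : ℝ → ℂ)
    (h₀ : IsRegularSimpleCurve η₀) (h₁ : IsRegularSimpleCurve η₁)
    (heq0 : ∀ t ∈ Set.Icc (0 : ℝ) ε, η₀ t = η₁ t)
    (heq1 : ∀ t ∈ Set.Icc (1 - ε) (1 : ℝ), η₀ t = η₁ t)
    (H : ℝ × ℝ → ℂ)
    (Hcont : ContinuousOn H (Set.Icc 0 1 ×ˢ Set.Icc ε (1 - ε)))
    (H0 : ∀ t ∈ Set.Icc ε (1 - ε), H (0, t) = η₀ t)
    (H1 : ∀ t ∈ Set.Icc ε (1 - ε), H (1, t) = η₁ t)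
    (Hleft : ∀ s ∈ Set.Icc (0 : ℝ) 1, H (s, ε) = η₀ ε)
    (Hright : ∀ s ∈ Set.Icc (0 : ℝ) 1, H (s, 1 - ε) = η₀ (1 - ε))
    (Havoid : ∀ s ∈ Set.Icc (0 : ℝ) 1, ∀ t ∈ Set.Ioo ε (1 - ε),
      H (s, t) ∉ η₀ '' Set.Icc 0 ε ∪ η₀ '' Set.Icc (1 - ε) 1)
    (θ₀ θ₁ : ℝ → ℝ)
    (hθ₀ : IsArgLift (curveDeriv η₀) θ₀) (hθ₁ : IsArgLift (curveDeriv η₁) θ₁) :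
    θ₀ 1 - θ₀ 0 = θ₁ 1 - θ₁ 0 := by
  exact totalCurvature_eq_of_homotopic_general hε.1 (by linarith [hε.2]) (by linarith [hε.1]) h₀ h₁
    heq0 heq1 ⟨Hcont, H0, H1, Hleft, Hright⟩
    (fun s hs t ht => ⟨fun h => Havoid s hs t ht (.inl ⟨0, by simp [hε.1.le], h.symm⟩),
      fun h => Havoid s hs t ht (.inr ⟨1, by simp [hε.1.le], h.symm⟩)⟩) hθ₀ hθ₁
end

section
/- Let D ⊂ ℂ be a bounded open set (not necessarily connected) and let f : ℂ → ℂ be a homeomorphism of ℂ which is holomorphic on D. For j = 1, 2 let ηⱼ : [0,1] → ℂ be a curve regular near its endpoints, and suppose η₁(0) = η₂(0) ∈ D and η₁(1) = η₂(1) ∈ D. Then for all regular simple curves r₁, r₂, s₁, s₂ such that rⱼ represents ηⱼ and sⱼ represents f ∘ ηⱼ for j = 1, 2, one has TC(s₁) − TC(r₁) = TC(s₂) − TC(r₂), where TC denotes total curvature. -/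
open Classical in
/-- The total curvature of a curve: `θ(1) − θ(0)` for an argument lift `θ` of its
derivative (and `0` if no argument lift exists). -/
noncomputable def totalCurvature (η : ℝ → ℂ) : ℝ :=
  if h : ∃ θ : ℝ → ℝ, IsArgLift (curveDeriv η) θ then h.choose 1 - h.choose 0 else 0

/-- A curve regular near its endpoints: an injective continuous curve which is
continuously differentiable with nonvanishing derivative on `[0,ε]` and `[1−ε,1]`
for some `ε ∈ (0, 1/2)`. -/
def RegularNearEndpoints (η : ℝ → ℂ) : Prop :=
  ContinuousOn η (Set.Icc 0 1) ∧ Set.InjOn η (Set.Icc 0 1) ∧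
    ∃ ε ∈ Set.Ioo (0 : ℝ) (1 / 2),
      ContDiffOn ℝ 1 η (Set.Icc 0 ε) ∧ ContDiffOn ℝ 1 η (Set.Icc (1 - ε) 1) ∧
        ∀ t ∈ Set.Icc (0 : ℝ) ε ∪ Set.Icc (1 - ε) 1, curveDeriv η t ≠ 0

/-- `r` represents `η`: `r` agrees with `η` near the endpoints and the middle parts
are homotopic (rel endpoints) in the twice-slitted plane
`ℂ \ (η([0,ε]) ∪ η([1−ε,1]))`. -/
def Represents (r η : ℝ → ℂ) : Prop :=
  ∃ ε ∈ Set.Ioo (0 : ℝ) (1 / 2),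
    (∀ t ∈ Set.Icc (0 : ℝ) ε ∪ Set.Icc (1 - ε) 1, r t = η t) ∧
    ∃ H : ℝ × ℝ → ℂ,
      ContinuousOn H (Set.Icc 0 1 ×ˢ Set.Icc ε (1 - ε)) ∧
      (∀ t ∈ Set.Icc ε (1 - ε), H (0, t) = η t ∧ H (1, t) = r t) ∧
      (∀ s ∈ Set.Icc (0 : ℝ) 1, H (s, ε) = η ε ∧ H (s, 1 - ε) = η (1 - ε)) ∧
      ∀ s ∈ Set.Icc (0 : ℝ) 1, ∀ t ∈ Set.Ioo ε (1 - ε),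
        H (s, t) ∉ η '' Set.Icc 0 ε ∪ η '' Set.Icc (1 - ε) 1

/-!
For a simple curve `r`, the secant slopes `(r t - r s) / (t - s)` form a nowhere vanishing
continuous function on the unit square whose diagonal values are the tangent vectors. Deforming the
diagonal to two edges of the square (Hopf) shows that the total curvature of `r` is the variation of
the argument of the secants issuing from `r 0` plus that of the secants ending at `r 1`.

These two variations are the same for `r` and for any curve `η` it represents: the homotopy stays
off the end arcs, so the ratio of the chords of `η` and `r` is homotopic to the constant `1` through
nowhere vanishing functions. This reduces total curvature to secants of `η`, which need not be
differentiable away from its ends.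

Replacing `η` by `f ∘ η` multiplies the secant slope based at an endpoint `p` by
`(f (η t) - f p) / (η t - p)`. As `f` is injective, `z ↦ (f z - f p) / (z - p)`, extended by
`deriv f p` at `p`, is continuous and nowhere vanishing on all of `ℂ` (`deriv f p ≠ 0` because the
representatives of `η` and `f ∘ η` are regular), so it has a global argument, whose variation along
`η` depends only on the endpoints of `η`.
-/

section

open Set Filter Topology

/-! ### Argument lifts -/

/-- `θ` is an argument lift of `g` over the set `s`; over `[0,1]` this unfolds to `IsArgLift`. -/
def IsArgLiftOn {X : Type*} [TopologicalSpace X] (g : X → ℂ) (θ : X → ℝ) (s : Set X) : Prop :=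
  ContinuousOn θ s ∧
    ∀ x ∈ s, ∃ r : ℝ, 0 < r ∧ g x * Complex.exp (-(θ x : ℂ) * Complex.I) = (r : ℂ)

theorem mul_exp_neg_mul_I_eq_iff {z : ℂ} {r θ : ℝ} :
    z * Complex.exp (-(θ : ℂ) * Complex.I) = r ↔ z = r * Complex.exp (θ * Complex.I) := by
  rw [neg_mul, Complex.exp_neg, mul_inv_eq_iff_eq_mul₀ (Complex.exp_ne_zero _)]

namespace IsArgLiftOn

variable {X : Type*} [TopologicalSpace X] {g h : X → ℂ} {θ φ : X → ℝ} {s : Set X}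

theorem exists_eq_mul_exp (hθ : IsArgLiftOn g θ s) {x : X} (hx : x ∈ s) :
    ∃ r : ℝ, 0 < r ∧ g x = r * Complex.exp (θ x * Complex.I) := by
  simpa only [mul_exp_neg_mul_I_eq_iff] using hθ.2 x hx

theorem exp_mul_I (hθ : IsArgLiftOn g θ s) {x : X} (hx : x ∈ s) :
    Complex.exp (θ x * Complex.I) = g x / ‖g x‖ := by
  obtain ⟨r, hr, hgx⟩ := hθ.exists_eq_mul_exp hx
  rw [hgx, norm_mul, Complex.norm_exp_ofReal_mul_I, Complex.norm_of_nonneg hr.le, mul_one,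
    mul_div_cancel_left₀ _ (Complex.ofReal_ne_zero.2 hr.ne')]

theorem congr (hθ : IsArgLiftOn g θ s) (hgh : EqOn h g s) : IsArgLiftOn h θ s :=
  ⟨hθ.1, fun x hx ↦ by simpa only [hgh hx] using hθ.2 x hx⟩

theorem mul (hθ : IsArgLiftOn g θ s) (hφ : IsArgLiftOn h φ s) :
    IsArgLiftOn (fun x ↦ g x * h x) (fun x ↦ θ x + φ x) s := by
  refine ⟨hθ.1.add hφ.1, fun x hx ↦ ?_⟩
  obtain ⟨r, hr, hgx⟩ := hθ.exists_eq_mul_exp hx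
  obtain ⟨r', hr', hhx⟩ := hφ.exists_eq_mul_exp hx
  refine ⟨r * r', mul_pos hr hr', mul_exp_neg_mul_I_eq_iff.2 ?_⟩
  simp only [hgx, hhx, Complex.ofReal_mul, Complex.ofReal_add, add_mul, Complex.exp_add]
  ring

theorem comp {Y : Type*} [TopologicalSpace Y] {t : Set Y} {γ : Y → X} (hθ : IsArgLiftOn g θ s)
    (hγ : ContinuousOn γ t) (hmaps : MapsTo γ t s) : IsArgLiftOn (g ∘ γ) (θ ∘ γ) t :=
  ⟨hθ.1.comp hγ hmaps, fun _ hy ↦ hθ.2 _ (hmaps hy)⟩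

theorem sub_eq_sub (hθ : IsArgLiftOn g θ s) (hφ : IsArgLiftOn g φ s) (hs : IsPreconnected s)
    {x y : X} (hx : x ∈ s) (hy : y ∈ s) : θ x - θ y = φ x - φ y := by
  have hexp : ∀ z ∈ s, Complex.exp (((θ z - φ z : ℝ) : ℂ) * Complex.I) = 1 := fun z hz ↦ by
    rw [Complex.ofReal_sub, sub_mul, Complex.exp_sub, hθ.exp_mul_I hz, ← hφ.exp_mul_I hz,
      div_self (Complex.exp_ne_zero _)]
  have hcont : ContinuousOn (fun z ↦ ((θ z - φ z : ℝ) : ℂ) * Complex.I) s :=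
    (Complex.continuous_ofReal.comp_continuousOn (hθ.1.sub hφ.1)).mul continuousOn_const
  have hconst : ((θ x - φ x : ℝ) : ℂ) * Complex.I = ((θ y - φ y : ℝ) : ℂ) * Complex.I :=
    Complex.isCoveringMap_exp.constOn_of_comp hs hcont
      (fun z hz z' hz' ↦ Subtype.ext ((hexp z hz).trans (hexp z' hz').symm)) hx hy
  have hreal : θ x - φ x = θ y - φ y :=
    Complex.ofReal_injective (mul_right_cancel₀ Complex.I_ne_zero hconst)
  linarith

theorem of_exp_eq {L : X → ℂ} (hL : ContinuousOn L s) (hexp : ∀ x ∈ s, Complex.exp (L x) = g x) :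
    IsArgLiftOn g (fun x ↦ (L x).im) s := by
  refine ⟨Complex.continuous_im.comp_continuousOn hL, fun x hx ↦
    ⟨Real.exp (L x).re, Real.exp_pos _, mul_exp_neg_mul_I_eq_iff.2 ?_⟩⟩
  rw [← hexp x hx, Complex.ofReal_exp, ← Complex.exp_add, Complex.re_add_im]

end IsArgLiftOn

theorem exists_isArgLiftOn_of_convex {E : Type*} [NormedAddCommGroup E] [NormedSpace ℝ E]
    {s : Set E} (hs : Convex ℝ s) {g : E → ℂ} (hg : ContinuousOn g s) (hg₀ : ∀ x ∈ s, g x ≠ 0) :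
    ∃ θ : E → ℝ, IsArgLiftOn g θ s := by
  obtain rfl | ⟨x₀, hx₀⟩ := s.eq_empty_or_nonempty
  · exact ⟨0, continuousOn_empty _, by simp⟩
  have := hs.contractibleSpace ⟨x₀, hx₀⟩
  have := hs.locallyPathConnectedSpace
  obtain ⟨L, ⟨-, hL⟩, -⟩ := Complex.isCoveringMapOn_exp.existsUnique_continuousMap_lifts
    ⟨s.domRestrict g, continuousOn_iff_continuous_domRestrict.1 hg⟩ (a₀ := ⟨x₀, hx₀⟩)
    (Complex.exp_log (hg₀ x₀ hx₀)) (fun x ↦ hg₀ x x.2)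
  have hext (x : s) : Function.extend Subtype.val L 0 (x : E) = L x :=
    Subtype.val_injective.extend_apply L 0 x
  refine ⟨_, .of_exp_eq (L := Function.extend Subtype.val L 0) ?_ fun x hx ↦ ?_⟩
  · exact continuousOn_iff_continuous_domRestrict.2 (L.continuous.congr fun x ↦ (hext x).symm)
  · rw [hext ⟨x, hx⟩]
    exact congrFun hL ⟨x, hx⟩

/-! ### Argument variation -/

/-- The argument of `g` varies by `w` along `[0,1]`. As with `HasSum`, the relation also says that
the variation exists, so that `g` has no zero on `[0,1]`. -/
def HasArgVariation (g : ℝ → ℂ) (w : ℝ) : Prop :=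
  ∃ θ : ℝ → ℝ, IsArgLift g θ ∧ θ 1 - θ 0 = w

namespace HasArgVariation

variable {g h : ℝ → ℂ} {v w : ℝ}

theorem unique (hv : HasArgVariation g v) (hw : HasArgVariation g w) : v = w := by
  obtain ⟨θ, hθ, rfl⟩ := hv
  obtain ⟨φ, hφ, rfl⟩ := hw
  exact IsArgLiftOn.sub_eq_sub hθ hφ isPreconnected_Icc (by simp) (by simp)

theorem congr (hg : HasArgVariation g w) (hgh : EqOn h g (Icc 0 1)) : HasArgVariation h w :=
  let ⟨θ, hθ, hw⟩ := hg
  ⟨θ, IsArgLiftOn.congr hθ hgh, hw⟩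

theorem mul (hg : HasArgVariation g v) (hh : HasArgVariation h w) :
    HasArgVariation (fun t ↦ g t * h t) (v + w) := by
  obtain ⟨θ, hθ, rfl⟩ := hg
  obtain ⟨φ, hφ, rfl⟩ := hh
  exact ⟨_, IsArgLiftOn.mul hθ hφ, by ring⟩

theorem const {c : ℂ} (hc : c ≠ 0) : HasArgVariation (fun _ ↦ c) 0 :=
  ⟨_, IsArgLiftOn.of_exp_eq continuousOn_const (fun _ _ ↦ Complex.exp_log hc), sub_self _⟩

theorem totalCurvature_eq {η : ℝ → ℂ} (hη : HasArgVariation (curveDeriv η) w) :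
    totalCurvature η = w := by
  have hlift : ∃ θ : ℝ → ℝ, IsArgLift (curveDeriv η) θ := hη.imp fun _ hθ ↦ hθ.1
  rw [totalCurvature, dif_pos hlift]
  exact unique ⟨_, hlift.choose_spec, rfl⟩ hη

end HasArgVariation

theorem IsArgLiftOn.hasArgVariation_comp {X : Type*} [TopologicalSpace X] {g : X → ℂ} {θ : X → ℝ}
    {s : Set X} {γ : ℝ → X} (hθ : IsArgLiftOn g θ s) (hγ : ContinuousOn γ (Icc 0 1))
    (hmaps : MapsTo γ (Icc 0 1) s) :
    HasArgVariation (fun t ↦ g (γ t)) (θ (γ 1) - θ (γ 0)) :=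
  ⟨_, hθ.comp hγ hmaps, rfl⟩

theorem exists_hasArgVariation {g : ℝ → ℂ} (hg : ContinuousOn g (Icc 0 1))
    (hg₀ : ∀ t ∈ Icc (0 : ℝ) 1, g t ≠ 0) : ∃ w, HasArgVariation g w :=
  let ⟨θ, hθ⟩ := exists_isArgLiftOn_of_convex (convex_Icc 0 1) hg hg₀
  ⟨_, θ, hθ, rfl⟩

theorem HasArgVariation.of_homotopy {G : ℝ × ℝ → ℂ} {c₀ c₁ : ℂ} {w : ℝ}
    (hw : HasArgVariation (fun t ↦ G (1, t)) w)
    (hG : ContinuousOn G (Icc 0 1 ×ˢ Icc 0 1)) (hG₀ : ∀ x ∈ Icc 0 1 ×ˢ Icc 0 1, G x ≠ 0)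
    (hstart : ∀ s ∈ Icc (0 : ℝ) 1, G (s, 0) = c₀) (hend : ∀ s ∈ Icc (0 : ℝ) 1, G (s, 1) = c₁) :
    HasArgVariation (fun t ↦ G (0, t)) w := by
  have h0 : (0 : ℝ) ∈ Icc (0 : ℝ) 1 := by simp
  have h1 : (1 : ℝ) ∈ Icc (0 : ℝ) 1 := by simp
  obtain ⟨Θ, hΘ⟩ := exists_isArgLiftOn_of_convex
    ((convex_Icc (0 : ℝ) 1).prod (convex_Icc (0 : ℝ) 1)) hG hG₀
  have hvert (s : ℝ) (hs : s ∈ Icc (0 : ℝ) 1) :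
      HasArgVariation (fun t ↦ G (s, t)) (Θ (s, 1) - Θ (s, 0)) :=
    hΘ.hasArgVariation_comp (γ := fun t ↦ (s, t)) (by fun_prop) fun t ht ↦ ⟨hs, ht⟩
  have hhor (t : ℝ) (ht : t ∈ Icc (0 : ℝ) 1) (c : ℂ) (hc : ∀ s ∈ Icc (0 : ℝ) 1, G (s, t) = c) :
      Θ (1, t) - Θ (0, t) = 0 :=
    (hΘ.hasArgVariation_comp (γ := fun s ↦ (s, t)) (by fun_prop) fun s hs ↦ ⟨hs, ht⟩).unique <|
      (HasArgVariation.const (hc 0 h0 ▸ hG₀ (0, t) ⟨h0, ht⟩)).congr hc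
  have hw_eq : w = Θ (0, 1) - Θ (0, 0) := by
    linarith [hw.unique (hvert 1 h1), hhor 0 h0 c₀ hstart, hhor 1 h1 c₁ hend]
  exact hw_eq ▸ hvert 0 h0

/-! ### Secant slopes -/

theorem exists_contDiff_eqOn_Icc {E : Type*} [NormedAddCommGroup E] [NormedSpace ℝ E]
    [CompleteSpace E] {η : ℝ → E} {a b : ℝ} (hab : a < b) (hη : ContDiffOn ℝ 1 η (Icc a b)) :
    ∃ F : ℝ → E, ContDiff ℝ 1 F ∧ EqOn F η (Icc a b) := by
  have hη' : ContinuousOn (derivWithin η (Icc a b)) (Icc a b) :=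
    hη.continuousOn_derivWithin (uniqueDiffOn_Icc hab) le_rfl
  set R : ℝ → E := IccExtend hab.le ((Icc a b).domRestrict (derivWithin η (Icc a b)))
  have hR : Continuous R := (continuousOn_iff_continuous_domRestrict.1 hη').Icc_extend'
  have hF (t : ℝ) : HasDerivAt (fun t ↦ η a + ∫ x in a..t, R x) (R t) t :=
    (hR.integral_hasStrictDerivAt a t).hasDerivAt.const_add _
  refine ⟨_, contDiff_one_iff_deriv.2 ⟨fun t ↦ (hF t).differentiableAt, ?_⟩, fun t ht ↦ ?_⟩
  · exact hR.congr fun t ↦ (hF t).deriv.symm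
  · have hint : ∫ x in a..t, R x = η t - η a := by
      refine intervalIntegral.integral_eq_sub_of_hasDerivAt_of_le ht.1
        (hη.continuousOn.mono (Icc_subset_Icc_right ht.2)) (fun x hx ↦ ?_)
        (hR.intervalIntegrable _ _)
      have hx' : x ∈ Ioo a b := ⟨hx.1, hx.2.trans_le ht.2⟩
      rw [show R x = derivWithin η (Icc a b) x from
        IccExtend_of_mem hab.le _ (Ioo_subset_Icc_self hx')]
      have hηx := hη.differentiableOn one_ne_zero x (Ioo_subset_Icc_self hx')
      exact hηx.hasDerivWithinAt.hasDerivAt (Icc_mem_nhds hx'.1 hx'.2)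
    simp only [hint, add_sub_cancel]

theorem dslope_eq_integral_deriv {E : Type*} [NormedAddCommGroup E] [NormedSpace ℝ E]
    [CompleteSpace E] {F : ℝ → E} (hF : ContDiff ℝ 1 F) (s t : ℝ) :
    dslope F s t = ∫ u in (0 : ℝ)..1, deriv F (s + u • (t - s)) := by
  obtain rfl | hst := eq_or_ne t s
  · simp
  · refine smul_right_injective E (sub_ne_zero.2 hst) ?_
    simp only [sub_smul_dslope]
    rw [intervalIntegral.integral_unitInterval_deriv_eq_sub (f := F)
      (hF.continuous_deriv_one.comp_continuousOn (by fun_prop))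
      fun u _ ↦ (hF.differentiable one_ne_zero _).hasDerivAt, add_sub_cancel]

theorem continuous_uncurry_dslope {E : Type*} [NormedAddCommGroup E] [NormedSpace ℝ E]
    [CompleteSpace E] {F : ℝ → E} (hF : ContDiff ℝ 1 F) :
    Continuous (fun x : ℝ × ℝ ↦ dslope F x.1 x.2) := by
  simp only [dslope_eq_integral_deriv hF]
  refine intervalIntegral.continuous_parametric_intervalIntegral_of_continuous' ?_ 0 1
  exact hF.continuous_deriv_one.comp
    (f := fun y : (ℝ × ℝ) × ℝ ↦ y.1.1 + y.2 • (y.1.2 - y.1.1)) (by fun_prop)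

/-- The slope of the secant of `η` between the times `a` and `t`, and the tangent vector
`curveDeriv η a` at `t = a`. Unlike Mathlib's `dslope`, it uses the one-sided derivative at the ends
of `[0,1]`. -/
noncomputable def secantSlope (η : ℝ → ℂ) (a : ℝ) : ℝ → ℂ :=
  Function.update (slope η a) a (curveDeriv η a)

section SecantSlope

variable {η r : ℝ → ℂ} {a s t : ℝ}

theorem secantSlope_self (η : ℝ → ℂ) (a : ℝ) : secantSlope η a a = curveDeriv η a :=
  Function.update_self ..

theorem secantSlope_of_ne (η : ℝ → ℂ) (h : t ≠ a) : secantSlope η a t = slope η a t :=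
  Function.update_of_ne h ..

theorem secantSlope_comm (η : ℝ → ℂ) (s t : ℝ) : secantSlope η s t = secantSlope η t s := by
  obtain rfl | h := eq_or_ne s t
  · rfl
  · rw [secantSlope_of_ne η h.symm, secantSlope_of_ne η h, slope_comm]

theorem continuousOn_uncurry_secantSlope (hη : ContDiffOn ℝ 1 η (Icc 0 1)) :
    ContinuousOn (fun x : ℝ × ℝ ↦ secantSlope η x.1 x.2) (Icc 0 1 ×ˢ Icc 0 1) := by
  obtain ⟨F, hF, hFη⟩ := exists_contDiff_eqOn_Icc zero_lt_one hη
  refine (continuous_uncurry_dslope hF).continuousOn.congr fun ⟨s, t⟩ ⟨hs, ht⟩ ↦ ?_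
  change secantSlope η s t = dslope F s t
  obtain rfl | h := eq_or_ne t s
  · rw [secantSlope_self, dslope_same, curveDeriv, ← derivWithin_congr hFη (hFη hs)]
    exact (hF.differentiable one_ne_zero t).derivWithin (uniqueDiffOn_Icc zero_lt_one t hs)
  · rw [secantSlope_of_ne η h, dslope_of_ne F h, slope, slope, hFη hs, hFη ht]

theorem IsRegularSimpleCurve.secantSlope_ne_zero (hr : IsRegularSimpleCurve r)
    (hs : s ∈ Icc (0 : ℝ) 1) (ht : t ∈ Icc (0 : ℝ) 1) : secantSlope r s t ≠ 0 := by
  obtain rfl | h := eq_or_ne t s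
  · rw [secantSlope_self]
    exact hr.1.2 t ht
  · rw [secantSlope_of_ne r h]
    exact smul_ne_zero (inv_ne_zero (sub_ne_zero.2 h)) (sub_ne_zero.2 fun e ↦ h (hr.2 ht hs e))

theorem secantSlope_comp {f : ℂ → ℂ} (ha : a ∈ Icc (0 : ℝ) 1) (hf : DifferentiableAt ℂ f (η a))
    (hη : DifferentiableWithinAt ℝ η (Icc 0 1) a) (t : ℝ) :
    secantSlope (f ∘ η) a t = dslope f (η a) (η t) * secantSlope η a t := by
  obtain rfl | h := eq_or_ne t a
  · rw [secantSlope_self, secantSlope_self, dslope_same]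
    exact (hf.hasDerivAt.comp_hasDerivWithinAt t hη.hasDerivWithinAt).derivWithin
      (uniqueDiffOn_Icc zero_lt_one t ha)
  · rw [secantSlope_of_ne _ h, secantSlope_of_ne _ h, slope, slope, vsub_eq_sub, vsub_eq_sub,
      mul_smul_comm, Function.comp_apply, Function.comp_apply, ← sub_smul_dslope, smul_eq_mul,
      mul_comm]

/-- Hopf's deformation: the diagonal of the unit square, along which the secant slope is the tangent
vector, is homotopic to the path `(0,0) → (0,1) → (1,1)`. -/
theorem IsRegularSimpleCurve.totalCurvature_eq_add (hr : IsRegularSimpleCurve r) {v w : ℝ}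
    (hv : HasArgVariation (secantSlope r 0) v) (hw : HasArgVariation (secantSlope r 1) w) :
    totalCurvature r = v + w := by
  obtain ⟨Θ, hΘ⟩ := exists_isArgLiftOn_of_convex
    ((convex_Icc (0 : ℝ) 1).prod (convex_Icc (0 : ℝ) 1))
    (continuousOn_uncurry_secantSlope hr.1.1) fun x hx ↦ hr.secantSlope_ne_zero hx.1 hx.2
  have hdiag : totalCurvature r = Θ (1, 1) - Θ (0, 0) :=
    ((hΘ.hasArgVariation_comp (γ := fun t ↦ (t, t)) (by fun_prop) fun t ht ↦ ⟨ht, ht⟩).congr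
      fun t _ ↦ (secantSlope_self r t).symm).totalCurvature_eq
  have hleft : v = Θ (0, 1) - Θ (0, 0) :=
    hv.unique (hΘ.hasArgVariation_comp (γ := fun t ↦ (0, t)) (by fun_prop)
      fun t ht ↦ ⟨by simp, ht⟩)
  have htop : w = Θ (1, 1) - Θ (0, 1) :=
    hw.unique ((hΘ.hasArgVariation_comp (γ := fun t ↦ (t, 1)) (by fun_prop)
      fun t ht ↦ ⟨ht, by simp⟩).congr fun t _ ↦ secantSlope_comm r 1 t)
  linarith

end SecantSlope

/-! ### Representatives -/

namespace Represents

variable {r η : ℝ → ℂ} {a : ℝ}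

theorem eventuallyEq (h : Represents r η) (ha : a = 0 ∨ a = 1) : r =ᶠ[𝓝[Icc 0 1] a] η := by
  obtain ⟨ε, ⟨hε, -⟩, heq, -⟩ := h
  filter_upwards [mem_nhdsWithin_of_mem_nhds (Metric.ball_mem_nhds a hε), self_mem_nhdsWithin]
    with t ht htI
  rw [Metric.mem_ball, Real.dist_eq, abs_lt] at ht
  refine heq t ?_
  rcases ha with rfl | rfl
  · exact Or.inl ⟨htI.1, by linarith⟩
  · exact Or.inr ⟨by linarith, htI.2⟩

/-- The witness is the ratio `(H (s, t) - r a) / (r t - r a)` of chords from the common endpoint: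
the homotopy `H` avoids the two end arcs, so it never meets `r a`. -/
theorem exists_chord_ratio_homotopy_middle (h : Represents r η) (hr : ContinuousOn r (Icc 0 1))
    (hinj : InjOn r (Icc 0 1)) (ha : a = 0 ∨ a = 1) :
    ∃ ε ∈ Ioo (0 : ℝ) (1 / 2), EqOn r η (Icc 0 ε ∪ Icc (1 - ε) 1) ∧
      ∃ Q : ℝ × ℝ → ℂ, ContinuousOn Q (Icc 0 1 ×ˢ Icc ε (1 - ε)) ∧
        (∀ x ∈ Icc 0 1 ×ˢ Icc ε (1 - ε), Q x ≠ 0) ∧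
        (∀ s ∈ Icc (0 : ℝ) 1, Q (s, ε) = 1 ∧ Q (s, 1 - ε) = 1) ∧
        ∀ t ∈ Icc ε (1 - ε), Q (1, t) = 1 ∧ η t - η a = Q (0, t) * (r t - r a) := by
  obtain ⟨ε, hε, heq, H, hH, hH01, hHend, hHslit⟩ := h
  obtain ⟨hε₀, hε₁⟩ := hε
  have hmem : ε ∈ Icc ε (1 - ε) ∧ 1 - ε ∈ Icc ε (1 - ε) := by
    constructor <;> constructor <;> linarith
  have hsub : Icc ε (1 - ε) ⊆ Icc 0 1 := Icc_subset_Icc hε₀.le (by linarith)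
  have ha_end : a ∈ Icc 0 ε ∪ Icc (1 - ε) 1 := by
    rcases ha with rfl | rfl
    · exact Or.inl ⟨le_rfl, hε₀.le⟩
    · exact Or.inr ⟨by linarith, le_rfl⟩
  have hrη : r ε = η ε ∧ r (1 - ε) = η (1 - ε) :=
    ⟨heq ε (Or.inl ⟨hε₀.le, le_rfl⟩), heq (1 - ε) (Or.inr ⟨le_rfl, by linarith⟩)⟩
  have hr_ne : ∀ t ∈ Icc ε (1 - ε), r t - r a ≠ 0 := fun t ht ↦ by
    refine sub_ne_zero.2 fun e ↦ ?_
    rcases ha with rfl | rfl <;> linarith [ht.1, ht.2, hinj (hsub ht) (by simp) e]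
  have hH_ne : ∀ s ∈ Icc (0 : ℝ) 1, ∀ t ∈ Icc ε (1 - ε), H (s, t) - r a ≠ 0 := fun s hs t ht ↦ by
    rcases eq_endpoints_or_mem_Ioo_of_mem_Icc ht with rfl | rfl | hmid
    · simpa only [(hHend s hs).1, ← hrη.1] using hr_ne t ht
    · simpa only [(hHend s hs).2, ← hrη.2] using hr_ne _ ht
    · exact sub_ne_zero.2 fun e ↦ hHslit s hs t hmid
        (image_union .. ▸ ⟨a, ha_end, (e.trans (heq a ha_end)).symm⟩)
  refine ⟨ε, ⟨hε₀, hε₁⟩, heq, fun x ↦ (H x - r a) / (r x.2 - r a), ?_, fun x hx ↦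
    div_ne_zero (hH_ne _ hx.1 _ hx.2) (hr_ne _ hx.2), fun s hs ↦ ⟨?_, ?_⟩, fun t ht ↦ ⟨?_, ?_⟩⟩
  · have hr_snd : ContinuousOn (fun x : ℝ × ℝ ↦ r x.2) (Icc 0 1 ×ˢ Icc ε (1 - ε)) :=
      hr.comp continuousOn_snd fun x hx ↦ hsub hx.2
    exact (hH.sub continuousOn_const).div (hr_snd.sub continuousOn_const) fun x hx ↦ hr_ne _ hx.2
  · simp only [(hHend s hs).1, ← hrη.1, div_self (hr_ne ε hmem.1)]
  · simp only [(hHend s hs).2, ← hrη.2, div_self (hr_ne _ hmem.2)]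
  · simp only [(hH01 t ht).2, div_self (hr_ne t ht)]
  · rw [div_mul_cancel₀ _ (hr_ne t ht), (hH01 t ht).1, heq a ha_end]

theorem exists_chord_ratio_homotopy (h : Represents r η) (hr : ContinuousOn r (Icc 0 1))
    (hinj : InjOn r (Icc 0 1)) (ha : a = 0 ∨ a = 1) :
    ∃ G : ℝ × ℝ → ℂ, ContinuousOn G (Icc 0 1 ×ˢ Icc 0 1) ∧
      (∀ x ∈ Icc 0 1 ×ˢ Icc 0 1, G x ≠ 0) ∧
      (∀ s ∈ Icc (0 : ℝ) 1, G (s, 0) = 1 ∧ G (s, 1) = 1) ∧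
      ∀ t ∈ Icc (0 : ℝ) 1, G (1, t) = 1 ∧ η t - η a = G (0, t) * (r t - r a) := by
  obtain ⟨ε, ⟨hε₀, hε₁⟩, heq, Q, hQ, hQ₀, hQ_end, hQ_mid⟩ :=
    h.exists_chord_ratio_homotopy_middle hr hinj ha
  have hle : ε ≤ 1 - ε := by linarith
  have haI : a ∈ Icc (0 : ℝ) 1 := by rcases ha with rfl | rfl <;> simp
  have hra : r a = η a := (h.eventuallyEq ha).self_of_nhdsWithin haI
  let c (t : ℝ) : ℝ := projIcc ε (1 - ε) hle t
  have hc : Continuous c := continuous_subtype_val.comp continuous_projIcc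
  have hc_mem (t : ℝ) : c t ∈ Icc ε (1 - ε) := (projIcc ε (1 - ε) hle t).2
  have hc_left {t : ℝ} (ht : t ≤ ε) : c t = ε := congrArg Subtype.val (projIcc_of_le_left hle ht)
  have hc_right {t : ℝ} (ht : 1 - ε ≤ t) : c t = 1 - ε :=
    congrArg Subtype.val (projIcc_of_right_le hle ht)
  have hc_mid {t : ℝ} (ht : t ∈ Icc ε (1 - ε)) : c t = t :=
    congrArg Subtype.val (projIcc_of_mem hle ht)
  refine ⟨fun x ↦ Q (x.1, c x.2), hQ.comp (by fun_prop) fun x hx ↦ ⟨hx.1, hc_mem _⟩,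
    fun x hx ↦ hQ₀ _ ⟨hx.1, hc_mem _⟩, fun s hs ↦ ⟨?_, ?_⟩,
    fun t ht ↦ ⟨(hQ_mid _ (hc_mem t)).1, ?_⟩⟩
  · simp only [hc_left hε₀.le, (hQ_end s hs).1]
  · simp only [hc_right (sub_le_self 1 hε₀.le), (hQ_end s hs).2]
  · have hQ_end₀ := hQ_end 0 (left_mem_Icc.2 zero_le_one)
    rcases le_or_gt t ε with htε | hεt
    · simp only [hc_left htε, hQ_end₀.1, one_mul, heq (Or.inl ⟨ht.1, htε⟩), hra]
    rcases le_or_gt (1 - ε) t with hεt' | htε'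
    · simp only [hc_right hεt', hQ_end₀.2, one_mul, heq (Or.inr ⟨hεt', ht.2⟩), hra]
    · have htm : t ∈ Icc ε (1 - ε) := ⟨hεt.le, htε'.le⟩
      simpa only [hc_mid htm] using (hQ_mid t htm).2

theorem exists_chord_ratio (h : Represents r η) (hr : ContinuousOn r (Icc 0 1))
    (hinj : InjOn r (Icc 0 1)) (ha : a = 0 ∨ a = 1) :
    ∃ q : ℝ → ℂ, ContinuousOn q (Icc 0 1) ∧ HasArgVariation q 0 ∧ q a = 1 ∧
      ∀ t ∈ Icc (0 : ℝ) 1, η t - η a = q t * (r t - r a) := by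
  obtain ⟨G, hG, hG₀, hG_end, hG01⟩ := h.exists_chord_ratio_homotopy hr hinj ha
  have h0 : (0 : ℝ) ∈ Icc (0 : ℝ) 1 := by simp
  refine ⟨fun t ↦ G (0, t), hG.comp (by fun_prop) fun t ht ↦ ⟨h0, ht⟩, ?_, ?_,
    fun t ht ↦ (hG01 t ht).2⟩
  · exact ((HasArgVariation.const one_ne_zero).congr fun t ht ↦ (hG01 t ht).1).of_homotopy hG hG₀
      (fun s hs ↦ (hG_end s hs).1) fun s hs ↦ (hG_end s hs).2
  · rcases ha with rfl | rfl
    exacts [(hG_end 0 h0).1, (hG_end 0 h0).2]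

theorem continuousOn (h : Represents r η) (hr : ContinuousOn r (Icc 0 1))
    (hinj : InjOn r (Icc 0 1)) : ContinuousOn η (Icc 0 1) := by
  obtain ⟨q, hq, -, -, hratio⟩ := h.exists_chord_ratio hr hinj (Or.inl rfl)
  have hcont : ContinuousOn (fun t ↦ q t * (r t - r 0) + η 0) (Icc 0 1) :=
    (hq.mul (hr.sub continuousOn_const)).add continuousOn_const
  exact hcont.congr fun t ht ↦ sub_eq_iff_eq_add.1 (hratio t ht)

theorem differentiableWithinAt (h : Represents r η) (hr : IsRegularCurve r) (ha : a = 0 ∨ a = 1) :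
    DifferentiableWithinAt ℝ η (Icc 0 1) a := by
  have haI : a ∈ Icc (0 : ℝ) 1 := by rcases ha with rfl | rfl <;> simp
  exact (hr.1.differentiableOn one_ne_zero a haI).congr_of_eventuallyEq_of_mem
    (h.eventuallyEq ha).symm haI

theorem hasArgVariation_secantSlope (h : Represents r η) (hr : ContinuousOn r (Icc 0 1))
    (hinj : InjOn r (Icc 0 1)) (ha : a = 0 ∨ a = 1) {v : ℝ}
    (hv : HasArgVariation (secantSlope r a) v) : HasArgVariation (secantSlope η a) v := by
  have haI : a ∈ Icc (0 : ℝ) 1 := by rcases ha with rfl | rfl <;> simp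
  obtain ⟨q, -, hq, hqa, hratio⟩ := h.exists_chord_ratio hr hinj ha
  refine zero_add v ▸ (hq.mul hv).congr fun t ht ↦ ?_
  change secantSlope η a t = q t * secantSlope r a t
  obtain rfl | hta := eq_or_ne t a
  · rw [hqa, one_mul, secantSlope_self, secantSlope_self]
    exact ((h.eventuallyEq ha).derivWithin_eq_of_mem haI).symm
  · simp only [secantSlope_of_ne _ hta, slope, vsub_eq_sub, hratio t ht, mul_smul_comm]

theorem exists_totalCurvature_eq_add (h : Represents r η) (hr : IsRegularSimpleCurve r) :
    ∃ v w, HasArgVariation (secantSlope η 0) v ∧ HasArgVariation (secantSlope η 1) w ∧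
      totalCurvature r = v + w := by
  have hvar (a : ℝ) (ha : a ∈ Icc (0 : ℝ) 1) : ∃ v, HasArgVariation (secantSlope r a) v :=
    exists_hasArgVariation ((continuousOn_uncurry_secantSlope hr.1.1).comp
      (f := fun t ↦ (a, t)) (by fun_prop) fun t ht ↦ ⟨ha, ht⟩)
      fun t ht ↦ hr.secantSlope_ne_zero ha ht
  obtain ⟨v, hv⟩ := hvar 0 (by simp)
  obtain ⟨w, hw⟩ := hvar 1 (by simp)
  have hcont := hr.1.1.continuousOn
  exact ⟨v, w, h.hasArgVariation_secantSlope hcont hr.2 (Or.inl rfl) hv,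
    h.hasArgVariation_secantSlope hcont hr.2 (Or.inr rfl) hw, hr.totalCurvature_eq_add hv hw⟩

end Represents

/-! ### Images under an injective map -/

section Image

variable {f : ℂ → ℂ} {η r s : ℝ → ℂ}

theorem exists_isArgLiftOn_dslope (hf : Continuous f) (hinj : Function.Injective f) {p : ℂ}
    (hp : DifferentiableAt ℂ f p) (hp' : deriv f p ≠ 0) :
    ∃ P : ℂ → ℝ, IsArgLiftOn (dslope f p) P univ := by
  refine exists_isArgLiftOn_of_convex convex_univ
    ((continuousOn_dslope univ_mem).2 ⟨hf.continuousOn, hp⟩) fun z _ ↦ ?_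
  obtain rfl | hz := eq_or_ne z p
  · rwa [dslope_same]
  · rw [dslope_of_ne _ hz, slope_def_field]
    exact div_ne_zero (sub_ne_zero.2 (hinj.ne hz)) (sub_ne_zero.2 hz)

theorem deriv_ne_zero_of_represents_comp {a : ℝ} (ha : a = 0 ∨ a = 1)
    (hr : IsRegularCurve r) (hs : IsRegularCurve s) (hrη : Represents r η)
    (hsη : Represents s (f ∘ η)) (hfa : DifferentiableAt ℂ f (η a)) : deriv f (η a) ≠ 0 := by
  have haI : a ∈ Icc (0 : ℝ) 1 := by rcases ha with rfl | rfl <;> simp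
  have htangent : curveDeriv s a = deriv f (η a) * secantSlope η a a := by
    rw [← dslope_same f, ← secantSlope_comp haI hfa (hrη.differentiableWithinAt hr ha),
      secantSlope_self]
    exact (hsη.eventuallyEq ha).derivWithin_eq_of_mem haI
  exact left_ne_zero_of_mul (htangent ▸ hs.2 a haI)

theorem totalCurvature_sub_eq {P Q : ℂ → ℝ}
    (hr : IsRegularSimpleCurve r) (hs : IsRegularSimpleCurve s) (hrη : Represents r η)
    (hsη : Represents s (f ∘ η)) (hf₀ : DifferentiableAt ℂ f (η 0))
    (hf₁ : DifferentiableAt ℂ f (η 1)) (hP : IsArgLiftOn (dslope f (η 0)) P univ)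
    (hQ : IsArgLiftOn (dslope f (η 1)) Q univ) :
    totalCurvature s - totalCurvature r = (P (η 1) - P (η 0)) + (Q (η 1) - Q (η 0)) := by
  obtain ⟨v, w, hv, hw, hTr⟩ := hrη.exists_totalCurvature_eq_add hr
  obtain ⟨v', w', hv', hw', hTs⟩ := hsη.exists_totalCurvature_eq_add hs
  have hη : ContinuousOn η (Icc 0 1) := hrη.continuousOn hr.1.1.continuousOn hr.2
  have hv'_eq : v' = (P (η 1) - P (η 0)) + v :=
    hv'.unique (((hP.hasArgVariation_comp hη (mapsTo_univ _ _)).mul hv).congr fun t _ ↦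
      secantSlope_comp (by simp) hf₀ (hrη.differentiableWithinAt hr.1 (Or.inl rfl)) t)
  have hw'_eq : w' = (Q (η 1) - Q (η 0)) + w :=
    hw'.unique (((hQ.hasArgVariation_comp hη (mapsTo_univ _ _)).mul hw).congr fun t _ ↦
      secantSlope_comp (by simp) hf₁ (hrη.differentiableWithinAt hr.1 (Or.inr rfl)) t)
  linarith

end Image

theorem winding_difference_well_defined_general {f : ℂ → ℂ} (hf : Continuous f)
    (hinj : Function.Injective f) {η₁ η₂ r₁ r₂ s₁ s₂ : ℝ → ℂ}
    (hstart : η₁ 0 = η₂ 0) (hend : η₁ 1 = η₂ 1)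
    (hfstart : DifferentiableAt ℂ f (η₁ 0)) (hfend : DifferentiableAt ℂ f (η₁ 1))
    (hr₁ : IsRegularSimpleCurve r₁) (hr₂ : IsRegularSimpleCurve r₂)
    (hs₁ : IsRegularSimpleCurve s₁) (hs₂ : IsRegularSimpleCurve s₂)
    (hr₁' : Represents r₁ η₁) (hr₂' : Represents r₂ η₂)
    (hs₁' : Represents s₁ (f ∘ η₁)) (hs₂' : Represents s₂ (f ∘ η₂)) :
    totalCurvature s₁ - totalCurvature r₁ = totalCurvature s₂ - totalCurvature r₂ := by
  obtain ⟨P, hP⟩ := exists_isArgLiftOn_dslope hf hinj hfstart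
    (deriv_ne_zero_of_represents_comp (Or.inl rfl) hr₁.1 hs₁.1 hr₁' hs₁' hfstart)
  obtain ⟨Q, hQ⟩ := exists_isArgLiftOn_dslope hf hinj hfend
    (deriv_ne_zero_of_represents_comp (Or.inr rfl) hr₁.1 hs₁.1 hr₁' hs₁' hfend)
  rw [totalCurvature_sub_eq hr₁ hs₁ hr₁' hs₁' hfstart hfend hP hQ]
  rw [hstart] at hP hfstart ⊢
  rw [hend] at hQ hfend ⊢
  exact (totalCurvature_sub_eq hr₂ hs₂ hr₂' hs₂' hfstart hfend hP hQ).symm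

end

/-- **Lemma 2.10.** Let `D ⊂ ℂ` be a bounded open set and `f` a homeomorphism of
`ℂ` holomorphic on `D`. For `j = 1, 2` let `ηⱼ` be curves regular near their
endpoints with common endpoints in `D`. Then for regular simple curves
`rⱼ` representing `ηⱼ` and `sⱼ` representing `f ∘ ηⱼ`, one has
`TC(s₁) − TC(r₁) = TC(s₂) − TC(r₂)`. -/
theorem winding_difference_well_defined
    (D : Set ℂ) (hDopen : IsOpen D) (hDbdd : Bornology.IsBounded D)
    (f : ℂ ≃ₜ ℂ) (hf : DifferentiableOn ℂ (⇑f) D)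
    (η₁ η₂ : ℝ → ℂ)
    (hη₁ : RegularNearEndpoints η₁) (hη₂ : RegularNearEndpoints η₂)
    (hstart : η₁ 0 = η₂ 0) (hstartD : η₁ 0 ∈ D)
    (hend : η₁ 1 = η₂ 1) (hendD : η₁ 1 ∈ D)
    (r₁ r₂ s₁ s₂ : ℝ → ℂ)
    (hr₁ : IsRegularSimpleCurve r₁) (hr₂ : IsRegularSimpleCurve r₂)
    (hs₁ : IsRegularSimpleCurve s₁) (hs₂ : IsRegularSimpleCurve s₂)
    (hr₁' : Represents r₁ η₁) (hr₂' : Represents r₂ η₂)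
    (hs₁' : Represents s₁ (⇑f ∘ η₁)) (hs₂' : Represents s₂ (⇑f ∘ η₂)) :
    totalCurvature s₁ - totalCurvature r₁ = totalCurvature s₂ - totalCurvature r₂ := by
  exact winding_difference_well_defined_general f.continuous f.injective hstart hend
    (hf.differentiableAt (hDopen.mem_nhds hstartD)) (hf.differentiableAt (hDopen.mem_nhds hendD))
    hr₁ hr₂ hs₁ hs₂ hr₁' hr₂' hs₁' hs₂'
end

section
/- Let m ≥ 1. For a function θ₀ : {1, …, 2m−1} → ℝ, write N(θ₀) for the number of meanders of size m with winding function θ₀, and for noncrossing perfect matchings a and b of P write N⁺(θ₀, a) for the number of meanders of size m with winding function θ₀ whose upper matching is a, N⁻(θ₀, b) for the number with lower matching b, and N(θ₀, a, b) for the number with upper matching a and lower matching b (so N(θ₀, a, b) ∈ {0, 1}). Then for every θ₀, a, b one has N(θ₀) · N(θ₀, a, b) = N⁺(θ₀, a) · N⁻(θ₀, b). Equivalently: if a meander of size m is sampled uniformly at random, then conditioned on its winding function, the upper arc diagram M⁺ and the lower arc diagram M⁻ are conditionally independent. -/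
/-!
Meanders of size `m`.  The point set `P = {1, …, 2m−1} ∪ {∞}` (ordered with `∞`
largest) is modeled as `Fin (n+1)` with `n = 2*m - 1`, the point `k` being index
`k − 1` and `∞` being the last index `Fin.last n`.  A (perfect) matching is an
involution without fixed points, recorded via its partner function.
-/

namespace Meander

/-- A perfect matching of `Fin (n+1)`, given by its partner function: a fixed-point
free involution. -/
def IsMatching {n : ℕ} (M : Fin (n + 1) → Fin (n + 1)) : Prop :=
  Function.Involutive M ∧ ∀ x, M x ≠ x

/-- A matching is noncrossing if there are no two pairs `{a,b}`, `{c,d}` with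
`a < c < b < d`. -/
def Noncrossing {n : ℕ} (M : Fin (n + 1) → Fin (n + 1)) : Prop :=
  ¬ ∃ a c : Fin (n + 1), a < c ∧ c < M a ∧ M a < M c

/-- The graph on the point set whose edge set is `M⁺ ∪ M⁻`. -/
def meanderGraph {n : ℕ} (Mp Mm : Fin (n + 1) → Fin (n + 1)) :
    SimpleGraph (Fin (n + 1)) :=
  SimpleGraph.fromRel fun x y => Mp x = y ∨ Mm x = y

/-- A meander: a pair of noncrossing perfect matchings (upper `Mp`, lower `Mm`)
whose union is a connected graph. -/
def IsMeander {n : ℕ} (Mp Mm : Fin (n + 1) → Fin (n + 1)) : Prop :=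
  IsMatching Mp ∧ Noncrossing Mp ∧ IsMatching Mm ∧ Noncrossing Mm ∧
    (meanderGraph Mp Mm).Connected

/-- The traversal sequence: `v₀ = ∞`, and `v_{i+1}` is the `M⁻`-partner of `vᵢ`
if `i` is even and the `M⁺`-partner of `vᵢ` if `i` is odd. -/
def traversal {n : ℕ} (Mp Mm : Fin (n + 1) → Fin (n + 1)) : ℕ → Fin (n + 1)
  | 0 => Fin.last n
  | (i + 1) =>
      if i % 2 = 0 then Mm (traversal Mp Mm i) else Mp (traversal Mp Mm i)

/-- The winding increment `δᵢ`: `+π` if the step from `vᵢ` to `v_{i+1}` uses `M⁻`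
(i.e. `i` even) and goes rightward, or uses `M⁺` (i.e. `i` odd) and goes leftward;
`−π` otherwise. -/
noncomputable def windingStep {n : ℕ} (Mp Mm : Fin (n + 1) → Fin (n + 1))
    (i : ℕ) : ℝ :=
  if (i % 2 = 0 ∧ traversal Mp Mm i < traversal Mp Mm (i + 1)) ∨
      (i % 2 ≠ 0 ∧ traversal Mp Mm (i + 1) < traversal Mp Mm i)
  then Real.pi else -Real.pi

/-- The winding value along the traversal: `w₁ = 0` and `w_{i+1} = wᵢ + δᵢ`
(so `wᵢ = θ(vᵢ)` for `1 ≤ i`). -/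
noncomputable def windingValue {n : ℕ} (Mp Mm : Fin (n + 1) → Fin (n + 1)) :
    ℕ → ℝ
  | 0 => 0
  | 1 => 0
  | (i + 2) => windingValue Mp Mm (i + 1) + windingStep Mp Mm (i + 1)

/-- `θ : {1, …, n} → ℝ` is the winding function of `(Mp, Mm)`: for `1 ≤ i ≤ n`
the traversal point `vᵢ` is not `∞` and `θ(vᵢ)` equals the winding value `wᵢ`. -/
def IsWindingFunction {n : ℕ} (Mp Mm : Fin (n + 1) → Fin (n + 1))
    (θ : Fin n → ℝ) : Prop :=
  ∀ i : ℕ, 1 ≤ i → i ≤ n →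
    ∃ h : (traversal Mp Mm i : ℕ) < n,
      θ ⟨(traversal Mp Mm i : ℕ), h⟩ = windingValue Mp Mm i

end Meander

/-!
The pair `(a, b)` is a meander with winding function `θ` exactly when `a` and `b` separately are
noncrossing matchings along whose arcs `θ` changes by the prescribed `±π` (and `θ = 0` at the
partner of `∞` under `b`). Since this condition splits into one on `a` and one on `b`, all four
counts factor as products.

The substance is that such `a`, `b` form a single loop. A loop avoiding `∞` would be a closed curve
of total turning `0`. To exclude it, read off the levels `t = ⌊θ / π⌋` of its points from left to
right as a word: `a` reduces the word to the empty one by cancelling neighbours `(t + 1) t`, and `b`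
by cancelling neighbours `t (t + 1)`. Replace the letter `t` by a monotone map `fₜ : ℤ → ℤ`
from an infinite chain of adjunctions `⋯ ⊣ fₜ₊₁ ⊣ fₜ ⊣ ⋯` with `fₜ₊₁ ∘ fₜ < id < fₜ ∘ fₜ₊₁`.
Then the first reduction bounds the composite of the word strictly above by `id`, the second one
strictly below.
-/

namespace Meander

section SortedProd

variable {α G : Type*} [LinearOrder α]

theorem sort_eq_cons_append_cons {s : Finset α} {x y : α} (hx : x ∈ s) (hy : y ∈ s)
    (hmin : ∀ z ∈ s, x ≤ z) (hxy : x < y) :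
    s.sort = x :: ({z ∈ s | x < z ∧ z < y}.sort ++ y :: {z ∈ s | y < z}.sort) := by
  have hsorted :
      (x :: ({z ∈ s | x < z ∧ z < y}.sort ++ y :: {z ∈ s | y < z}.sort)).Pairwise (· < ·) := by
    simp only [List.pairwise_cons, List.pairwise_append, List.mem_append, List.mem_cons,
      Finset.mem_sort, Finset.mem_filter]
    refine ⟨?_, (Finset.sortedLT_sort _).pairwise, ⟨?_, (Finset.sortedLT_sort _).pairwise⟩, ?_⟩ <;>
      grind
  have htoFinset :
      (x :: ({z ∈ s | x < z ∧ z < y}.sort ++ y :: {z ∈ s | y < z}.sort)).toFinset = s := by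
    ext z
    simp only [List.mem_toFinset, List.mem_append, List.mem_cons, Finset.mem_sort,
      Finset.mem_filter]
    grind
  have hsort := (List.toFinset_sort (· ≤ ·) (hsorted.imp ne_of_lt)).2 (hsorted.imp le_of_lt)
  rwa [htoFinset] at hsort

/-- The product of `φ` over a finite set, the factors being taken in increasing order of their
indices. -/
def sortedProd [Monoid G] (φ : α → G) (s : Finset α) : G :=
  (s.sort.map φ).prod

theorem sortedProd_eq_mul_mul_mul_mul [Monoid G] (φ : α → G) {s : Finset α} {x y : α}
    (hx : x ∈ s) (hy : y ∈ s) (hmin : ∀ z ∈ s, x ≤ z) (hxy : x < y) :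
    sortedProd φ s = φ x * sortedProd φ {z ∈ s | x < z ∧ z < y} * φ y *
      sortedProd φ {z ∈ s | y < z} := by
  simp [sortedProd, sort_eq_cons_append_cons hx hy hmin hxy, mul_assoc]

end SortedProd

section NoncrossingMatching

variable {n : ℕ} {M : Fin (n + 1) → Fin (n + 1)} {x z : Fin (n + 1)}

theorem Noncrossing.lt_partner_lt (hnc : Noncrossing M) (hM : IsMatching M)
    (hxz : x < z) (hz : z < M x) : x < M z ∧ M z < M x := by
  have hMzx : M z ≠ M x := hM.1.injective.ne hxz.ne'
  have hMz : M z ≠ x := fun h => hz.ne (by rw [← h, hM.1])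
  constructor
  · by_contra! hle
    exact hnc ⟨M z, x, hle.lt_of_ne hMz, by rwa [hM.1], by rwa [hM.1]⟩
  · by_contra! hle
    exact hnc ⟨x, z, hxz, hz, hle.lt_of_ne hMzx.symm⟩

theorem Noncrossing.partner_lt_partner (hnc : Noncrossing M) (hM : IsMatching M)
    (hxz : x < M z) (hz : M x < z) : M x < M z := by
  by_contra! hle
  have hlt : M z < M x := hle.lt_of_ne (hM.1.injective.ne fun h => by grind)
  have := (hnc.lt_partner_lt hM hxz hlt).2
  rw [hM.1] at this
  exact lt_asymm hz this

section Products

variable {G : Type*} [Monoid G] [Preorder G] [MulLeftMono G] [MulRightMono G]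
  {φ : Fin (n + 1) → G} {s : Finset (Fin (n + 1))}

theorem sortedProd_lt_one (hM : IsMatching M) (hnc : Noncrossing M) (hs : ∀ x ∈ s, M x ∈ s)
    (hφ : ∀ x ∈ s, x < M x → φ x * φ (M x) < 1) (hne : s.Nonempty) : sortedProd φ s < 1 := by
  induction s using Finset.strongInduction with
  | H s ih =>
    have ih_le : ∀ t ⊂ s, (∀ x ∈ t, M x ∈ t) → sortedProd φ t ≤ 1 := fun t hts ht => by
      obtain rfl | hne := t.eq_empty_or_nonempty
      · simp [sortedProd]
      · exact (ih t hts ht (fun x hx => hφ x (hts.1 hx)) hne).le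
    obtain ⟨x, hx, hmin⟩ := s.exists_minimal hne
    replace hmin : ∀ z ∈ s, x ≤ z := fun z hz => (le_total x z).elim id (hmin hz)
    have hxM : x < M x := (hmin _ (hs x hx)).lt_of_ne (hM.2 x).symm
    have hinner : sortedProd φ {z ∈ s | x < z ∧ z < M x} ≤ 1 := by
      refine ih_le _ (Finset.filter_ssubset.2 ⟨x, hx, by simp⟩) fun z hz => ?_
      obtain ⟨hzs, hxz, hzM⟩ := Finset.mem_filter.1 hz
      exact Finset.mem_filter.2 ⟨hs z hzs, hnc.lt_partner_lt hM hxz hzM⟩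
    have houter : sortedProd φ {z ∈ s | M x < z} ≤ 1 := by
      refine ih_le _ (Finset.filter_ssubset.2 ⟨x, hx, hxM.not_gt⟩) fun z hz => ?_
      obtain ⟨hzs, hzM⟩ := Finset.mem_filter.1 hz
      have hMz : M z ≠ x := fun h => hzM.ne (by rw [← h, hM.1])
      exact Finset.mem_filter.2 ⟨hs z hzs,
        hnc.partner_lt_partner hM ((hmin _ (hs z hzs)).lt_of_ne hMz.symm) hzM⟩
    calc sortedProd φ s
        = φ x * sortedProd φ {z ∈ s | x < z ∧ z < M x} * φ (M x) *
            sortedProd φ {z ∈ s | M x < z} :=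
          sortedProd_eq_mul_mul_mul_mul φ hx (hs x hx) hmin hxM
      _ ≤ φ x * 1 * φ (M x) * 1 := by gcongr
      _ = φ x * φ (M x) := by simp only [mul_one]
      _ < 1 := hφ x hx hxM

theorem one_lt_sortedProd (hM : IsMatching M) (hnc : Noncrossing M) (hs : ∀ x ∈ s, M x ∈ s)
    (hφ : ∀ x ∈ s, x < M x → 1 < φ x * φ (M x)) (hne : s.Nonempty) : 1 < sortedProd φ s :=
  sortedProd_lt_one (G := Gᵒᵈ) hM hnc hs hφ hne

end Products

end NoncrossingMatching

section AdjointChain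

instance orderHom_mulLeftMono {α : Type*} [Preorder α] : MulLeftMono (α →o α) where
  elim f _ _ hgh x := f.monotone (hgh x)

instance orderHom_mulRightMono {α : Type*} [Preorder α] : MulRightMono (α →o α) where
  elim f _ _ hgh x := hgh (f x)

/-- A doubly infinite chain of monotone self-maps of `ℤ`, each left adjoint to its predecessor.
It has period `4` in `t`, running through rounding down to even, up to even, down to odd and up to
odd integers. -/
def adjointChain (t : ℤ) : ℤ →o ℤ where
  toFun k := 2 * ((k + (t + 1) / 2) / 2) - t / 2
  monotone' k l hkl := by dsimp only; omega

theorem adjointChain_apply (t k : ℤ) :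
    adjointChain t k = 2 * ((k + (t + 1) / 2) / 2) - t / 2 := rfl

theorem gc_adjointChain (t : ℤ) : GaloisConnection (adjointChain (t + 1)) (adjointChain t) := by
  intro k l
  simp only [adjointChain_apply]
  omega

theorem adjointChain_succ_mul_lt_one (t : ℤ) : adjointChain (t + 1) * adjointChain t < 1 := by
  refine lt_of_le_of_ne (gc_adjointChain t).l_u_le fun h => ?_
  have := DFunLike.congr_fun h (1 - (t + 1) / 2)
  simp only [mul_apply_eq_comp, one_apply_eq_self, adjointChain_apply] at this
  omega

theorem one_lt_adjointChain_mul_succ (t : ℤ) : 1 < adjointChain t * adjointChain (t + 1) := by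
  refine lt_of_le_of_ne (gc_adjointChain t).le_u_l fun h => ?_
  have := DFunLike.congr_fun h (1 - t / 2)
  simp only [mul_apply_eq_comp, one_apply_eq_self, adjointChain_apply] at this
  omega

end AdjointChain

theorem eq_empty_of_levels {n : ℕ} {a b : Fin (n + 1) → Fin (n + 1)} {s : Finset (Fin (n + 1))}
    (level : Fin (n + 1) → ℤ)
    (ha : IsMatching a) (ha_nc : Noncrossing a) (has : ∀ x ∈ s, a x ∈ s)
    (ha_level : ∀ x ∈ s, x < a x → level x = level (a x) + 1)
    (hb : IsMatching b) (hb_nc : Noncrossing b) (hbs : ∀ x ∈ s, b x ∈ s)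
    (hb_level : ∀ x ∈ s, x < b x → level (b x) = level x + 1) : s = ∅ := by
  by_contra! hne
  let φ : Fin (n + 1) → (ℤ →o ℤ) := fun x => adjointChain (level x)
  have hlt : sortedProd φ s < 1 := sortedProd_lt_one ha ha_nc has (fun x hx hxa => by
    simpa only [φ, ha_level x hx hxa] using adjointChain_succ_mul_lt_one (level (a x))) hne
  have hgt : 1 < sortedProd φ s := one_lt_sortedProd hb hb_nc hbs (fun x hx hxb => by
    simpa only [φ, hb_level x hx hxb] using one_lt_adjointChain_mul_succ (level x)) hne
  exact lt_asymm hlt hgt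

section Traversal

variable {n : ℕ} {a b : Fin (n + 1) → Fin (n + 1)}

/-- The matching used by the `i`-th step of the traversal. -/
def stepMatching (a b : Fin (n + 1) → Fin (n + 1)) (i : ℕ) : Fin (n + 1) → Fin (n + 1) :=
  if i % 2 = 0 then b else a

theorem stepMatching_congr {i j : ℕ} (h : i % 2 = j % 2) :
    stepMatching a b i = stepMatching a b j := by
  simp only [stepMatching, h]

theorem traversal_succ (i : ℕ) :
    traversal a b (i + 1) = stepMatching a b i (traversal a b i) := by
  rw [traversal, stepMatching]
  split <;> rfl

theorem IsMatching.stepMatching (ha : IsMatching a) (hb : IsMatching b) (i : ℕ) :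
    IsMatching (stepMatching a b i) := by
  unfold Meander.stepMatching
  split <;> assumption

theorem stepMatching_traversal_succ (ha : IsMatching a) (hb : IsMatching b) (i : ℕ) :
    stepMatching a b i (traversal a b (i + 1)) = traversal a b i := by
  rw [traversal_succ, (ha.stepMatching hb i).1]

theorem traversal_succ_ne (ha : IsMatching a) (hb : IsMatching b) (i : ℕ) :
    traversal a b (i + 1) ≠ traversal a b i := by
  rw [traversal_succ]
  exact (ha.stepMatching hb i).2 _

-- Stepping towards each other from both ends shortens an odd closed stretch to a fixed point.
theorem traversal_add_odd_ne (ha : IsMatching a) (hb : IsMatching b) (d i : ℕ) :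
    traversal a b (i + (2 * d + 1)) ≠ traversal a b i := by
  induction d generalizing i with
  | zero => exact traversal_succ_ne ha hb i
  | succ d ih =>
    intro h
    refine ih (i + 1) ?_
    rw [traversal_succ i, ← h, show i + (2 * (d + 1) + 1) = i + 1 + (2 * d + 1) + 1 by ring,
      stepMatching_congr (show i % 2 = (i + 1 + (2 * d + 1)) % 2 by omega),
      stepMatching_traversal_succ ha hb]

theorem even_of_traversal_add_eq (ha : IsMatching a) (hb : IsMatching b) {i d : ℕ}
    (h : traversal a b (i + d) = traversal a b i) : Even d := by
  by_contra hd
  obtain ⟨e, rfl⟩ := Nat.not_even_iff_odd.1 hd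
  exact traversal_add_odd_ne ha hb e i h

theorem even_of_traversal_eq_last (ha : IsMatching a) (hb : IsMatching b) {t : ℕ}
    (ht : traversal a b t = Fin.last n) : Even t :=
  even_of_traversal_add_eq ha hb (i := 0) (by rwa [zero_add])

theorem traversal_eq_last_of_add_eq (ha : IsMatching a) (hb : IsMatching b) {i d : ℕ}
    (h : traversal a b (i + d) = traversal a b i) : traversal a b d = Fin.last n := by
  have hd := Nat.even_iff.1 (even_of_traversal_add_eq ha hb h)
  induction i with
  | zero => rwa [zero_add] at h
  | succ i ih =>
    refine ih ?_
    rw [← stepMatching_traversal_succ ha hb i, ← h, show i + 1 + d = i + d + 1 by ring,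
      stepMatching_congr (show i % 2 = (i + d) % 2 by omega), stepMatching_traversal_succ ha hb]

theorem traversal_periodic (ha : IsMatching a) (hb : IsMatching b) {t : ℕ}
    (ht : traversal a b t = Fin.last n) : Function.Periodic (traversal a b) t := by
  have ht_even := Nat.even_iff.1 (even_of_traversal_eq_last ha hb ht)
  intro i
  induction i with
  | zero => rwa [zero_add]
  | succ i ih =>
    rw [show i + 1 + t = i + t + 1 by ring, traversal_succ, traversal_succ, ih,
      stepMatching_congr (show (i + t) % 2 = i % 2 by omega)]

theorem stepMatching_mem_range_traversal (ha : IsMatching a) (hb : IsMatching b) {t : ℕ}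
    (ht_pos : 0 < t) (ht : traversal a b t = Fin.last n) (k : ℕ) {x : Fin (n + 1)}
    (hx : x ∈ Set.range (traversal a b)) :
    stepMatching a b k x ∈ Set.range (traversal a b) := by
  obtain ⟨i, rfl⟩ := hx
  by_cases hik : k % 2 = i % 2
  · exact ⟨i + 1, by rw [traversal_succ, stepMatching_congr hik]⟩
  · have ht_even := Nat.even_iff.1 (even_of_traversal_eq_last ha hb ht)
    refine ⟨i + t - 1, ?_⟩
    rw [← traversal_periodic ha hb ht i, ← stepMatching_traversal_succ ha hb (i + t - 1),
      show i + t - 1 + 1 = i + t by omega,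
      stepMatching_congr (show k % 2 = (i + t - 1) % 2 by omega)]

theorem lt_of_traversal_surjective (ha : IsMatching a) (hb : IsMatching b)
    (hsurj : Function.Surjective (traversal a b)) {t : ℕ} (ht_pos : 0 < t)
    (ht : traversal a b t = Fin.last n) : n < t := by
  have hsurj_fin : Function.Surjective fun i : Fin t => traversal a b i := fun x => by
    obtain ⟨i, rfl⟩ := hsurj x
    exact ⟨⟨i % t, Nat.mod_lt i ht_pos⟩, (traversal_periodic ha hb ht).map_mod_nat i⟩
  simpa using Fintype.card_le_of_surjective _ hsurj_fin

theorem exists_traversal_eq (ha : IsMatching a) (hb : IsMatching b)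
    (hlast : ∀ i, 1 ≤ i → i ≤ n → traversal a b i ≠ Fin.last n) (x : Fin (n + 1)) :
    ∃ i ≤ n, traversal a b i = x := by
  have hinj : Function.Injective fun i : Fin (n + 1) => traversal a b i := by
    refine Function.Injective.of_lt_imp_ne fun i j (hij : (i : ℕ) < j) h => ?_
    refine hlast (j - i) (by omega) (by omega) (traversal_eq_last_of_add_eq ha hb (i := i) ?_)
    rw [Nat.add_sub_cancel' hij.le, h]
  obtain ⟨i, hi⟩ := Finite.surjective_of_injective hinj x
  exact ⟨i, i.is_le, hi⟩

theorem traversal_add_one_eq_last (ha : IsMatching a) (hb : IsMatching b)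
    (hlast : ∀ i, 1 ≤ i → i ≤ n → traversal a b i ≠ Fin.last n) :
    traversal a b (n + 1) = Fin.last n := by
  obtain ⟨i, hi, h⟩ := exists_traversal_eq ha hb hlast (traversal a b (n + 1))
  have hreturn : traversal a b (n + 1 - i) = Fin.last n :=
    traversal_eq_last_of_add_eq ha hb (i := i) (by rw [h]; congr 1; omega)
  obtain rfl | hi_pos := i.eq_zero_or_pos
  · exact hreturn
  · exact absurd hreturn (hlast _ (by omega) (by omega))

theorem meanderGraph_connected (ha : IsMatching a) (hb : IsMatching b)
    (hsurj : Function.Surjective (traversal a b)) : (meanderGraph a b).Connected := by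
  have hreach : ∀ i, (meanderGraph a b).Reachable (Fin.last n) (traversal a b i) := by
    intro i
    induction i with
    | zero => exact SimpleGraph.Reachable.refl _
    | succ i ih =>
      refine ih.trans (SimpleGraph.Adj.reachable ?_)
      rw [meanderGraph, SimpleGraph.fromRel_adj]
      refine ⟨(traversal_succ_ne ha hb i).symm, Or.inl ?_⟩
      rw [traversal]
      split <;> simp
  rw [SimpleGraph.connected_iff_exists_forall_reachable]
  exact ⟨Fin.last n, hsurj.forall.2 hreach⟩

end Traversal

section Winding

variable {n : ℕ} {a b : Fin (n + 1) → Fin (n + 1)} {θ : Fin n → ℝ}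

/-- The turning angle of a lower arc traversed from `x` to `y`; an upper arc turns by the opposite
angle. -/
noncomputable def turn {m : ℕ} (x y : Fin m) : ℝ :=
  if x < y then Real.pi else -Real.pi

theorem turn_swap {m : ℕ} {x y : Fin m} (hxy : x ≠ y) : turn y x = -turn x y := by
  rcases hxy.lt_or_gt with h | h <;> simp [turn, h, h.not_gt]

theorem turn_castSucc {m : ℕ} (x y : Fin m) : turn x.castSucc y.castSucc = turn x y := by
  simp only [turn, Fin.castSucc_lt_castSucc_iff]

theorem windingStep_eq (ha : IsMatching a) (hb : IsMatching b) (i : ℕ) :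
    windingStep a b i = (-1) ^ i * turn (traversal a b i) (traversal a b (i + 1)) := by
  rcases Nat.mod_two_eq_zero_or_one i with hi | hi
  · simp [windingStep, turn, hi, (Nat.even_iff.2 hi).neg_one_pow]
  · rw [(Nat.odd_iff.2 hi).neg_one_pow, neg_one_mul, ← turn_swap (traversal_succ_ne ha hb i).symm]
    simp [windingStep, turn, hi]

theorem windingValue_succ {i : ℕ} (hi : 1 ≤ i) :
    windingValue a b (i + 1) = windingValue a b i + windingStep a b i := by
  obtain ⟨i, rfl⟩ := Nat.exists_eq_add_of_le' hi
  rw [windingValue]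

theorem isWindingFunction_iff_exists_castSucc : IsWindingFunction a b θ ↔
    ∀ i, 1 ≤ i → i ≤ n → ∃ x : Fin n, traversal a b i = x.castSucc ∧ θ x = windingValue a b i := by
  refine forall₃_congr fun i _ _ => ⟨fun ⟨h, hθ⟩ => ⟨⟨_, h⟩, rfl, hθ⟩, ?_⟩
  rintro ⟨x, hx, hθ⟩
  exact ⟨by simp [hx], by simpa [hx] using hθ⟩

theorem isWindingFunction_iff (ha : IsMatching a) (hb : IsMatching b) :
    IsWindingFunction a b θ ↔
      (∀ i, 1 ≤ i → i ≤ n → traversal a b i ≠ Fin.last n) ∧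
      (∀ x : Fin n, traversal a b 1 = x.castSucc → θ x = 0) ∧
      ∀ i (x y : Fin n), 1 ≤ i → i < n → traversal a b i = x.castSucc →
        traversal a b (i + 1) = y.castSucc → θ y = θ x + (-1) ^ i * turn x y := by
  have hvalue_succ {i : ℕ} {x y : Fin n} (hi : 1 ≤ i) (hx : traversal a b i = x.castSucc)
      (hy : traversal a b (i + 1) = y.castSucc) :
      windingValue a b (i + 1) = windingValue a b i + (-1) ^ i * turn x y := by
    rw [windingValue_succ hi, windingStep_eq ha hb, hx, hy, turn_castSucc]
  rw [isWindingFunction_iff_exists_castSucc]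
  constructor
  · intro h
    have hθ {i : ℕ} {x : Fin n} (hi : 1 ≤ i) (hin : i ≤ n) (hx : traversal a b i = x.castSucc) :
        θ x = windingValue a b i := by
      obtain ⟨y, hy, hθ⟩ := h i hi hin
      rwa [Fin.castSucc_injective n (hx.symm.trans hy)]
    refine ⟨fun i hi hin => ?_, fun x hx => ?_, fun i x y hi hin hx hy => ?_⟩
    · obtain ⟨x, hx, -⟩ := h i hi hin
      exact hx ▸ x.castSucc_ne_last
    · rw [hθ le_rfl x.pos hx, windingValue]
    · rw [hθ hi hin.le hx, hθ (by omega) hin hy, hvalue_succ hi hx hy]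
  · rintro ⟨hlast, hθ_one, hθ_succ⟩ i hi hin
    induction i, hi using Nat.le_induction with
    | base =>
      obtain ⟨x, hx⟩ := Fin.exists_castSucc_eq.2 (hlast 1 le_rfl hin)
      exact ⟨x, hx.symm, by rw [hθ_one x hx.symm, windingValue]⟩
    | succ i hi ih =>
      obtain ⟨x, hx, hθx⟩ := ih (by omega)
      obtain ⟨y, hy⟩ := Fin.exists_castSucc_eq.2 (hlast (i + 1) (by omega) hin)
      exact ⟨y, hy.symm, by rw [hθ_succ i x y hi hin hx hy.symm, hθx, hvalue_succ hi hx hy.symm]⟩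

/-- `M` is a noncrossing matching along whose arcs `θ` changes by `ε` times the turning angle of a
lower arc: `ε = 1` is the condition imposed on lower matchings and `ε = -1` the one on upper
matchings. The arc ending at `∞` is unconstrained. -/
structure IsCompatible (ε : ℝ) (θ : Fin n → ℝ) (M : Fin (n + 1) → Fin (n + 1)) : Prop where
  isMatching : IsMatching M
  noncrossing : Noncrossing M
  eq_add_turn : ∀ x y : Fin n, M x.castSucc = y.castSucc → θ y = θ x + ε * turn x y

theorem IsCompatible.eq_add_of_lt {ε : ℝ} {M : Fin (n + 1) → Fin (n + 1)}
    (hM : IsCompatible ε θ M) {x y : Fin n} (hxy : M x.castSucc = y.castSucc)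
    (hlt : x.castSucc < M x.castSucc) : θ y = θ x + ε * Real.pi := by
  rw [hM.eq_add_turn x y hxy, turn, if_pos (by simpa [hxy] using hlt)]

theorem IsCompatible.stepMatching (ha : IsCompatible (-1) θ a) (hb : IsCompatible 1 θ b) (i : ℕ) :
    IsCompatible ((-1) ^ i) θ (stepMatching a b i) := by
  rcases Nat.mod_two_eq_zero_or_one i with hi | hi
  · simpa [Meander.stepMatching, hi, (Nat.even_iff.2 hi).neg_one_pow] using hb
  · simpa [Meander.stepMatching, hi, (Nat.odd_iff.2 hi).neg_one_pow] using ha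

theorem eq_empty_of_isCompatible (ha : IsCompatible (-1) θ a) (hb : IsCompatible 1 θ b)
    {s : Finset (Fin (n + 1))} (hlast : Fin.last n ∉ s) (has : ∀ x ∈ s, a x ∈ s)
    (hbs : ∀ x ∈ s, b x ∈ s) : s = ∅ := by
  have exists_castSucc {x : Fin (n + 1)} (hx : x ∈ s) : ∃ y : Fin n, y.castSucc = x :=
    Fin.exists_castSucc_eq.2 (ne_of_mem_of_not_mem hx hlast)
  have floor_add_pi (u : ℝ) : ⌊(u + Real.pi) / Real.pi⌋ = ⌊u / Real.pi⌋ + 1 := by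
    rw [add_div, div_self Real.pi_ne_zero, Int.floor_add_one]
  refine eq_empty_of_levels (Fin.snoc (α := fun _ => ℤ) (fun x => ⌊θ x / Real.pi⌋) 0)
    ha.isMatching ha.noncrossing has (fun x hx hlt => ?_)
    hb.isMatching hb.noncrossing hbs (fun x hx hlt => ?_)
  · obtain ⟨y, hy⟩ := exists_castSucc (has x hx)
    obtain ⟨x, rfl⟩ := exists_castSucc hx
    have hθ : θ x = θ y + Real.pi := by linarith [ha.eq_add_of_lt hy.symm hlt]
    rw [← hy, Fin.snoc_castSucc, Fin.snoc_castSucc, hθ, floor_add_pi]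
  · obtain ⟨y, hy⟩ := exists_castSucc (hbs x hx)
    obtain ⟨x, rfl⟩ := exists_castSucc hx
    have hθ : θ y = θ x + Real.pi := by linarith [hb.eq_add_of_lt hy.symm hlt]
    rw [← hy, Fin.snoc_castSucc, Fin.snoc_castSucc, hθ, floor_add_pi]

theorem traversal_ne_last_of_isCompatible (ha : IsCompatible (-1) θ a) (hb : IsCompatible 1 θ b)
    (i : ℕ) (hi : 1 ≤ i) (hin : i ≤ n) : traversal a b i ≠ Fin.last n := by
  intro hlast
  have hmem := stepMatching_mem_range_traversal ha.isMatching hb.isMatching hi hlast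
  classical
  have hempty : ({x | x ∉ Set.range (traversal a b)} : Finset (Fin (n + 1))) = ∅ := by
    refine eq_empty_of_isCompatible ha hb ?_ (fun x hx => ?_) (fun x hx => ?_)
    · simpa using ⟨0, rfl⟩
    · rw [Finset.mem_filter_univ] at hx ⊢
      exact fun h => hx (ha.isMatching.1 x ▸ hmem 1 h)
    · rw [Finset.mem_filter_univ] at hx ⊢
      exact fun h => hx (hb.isMatching.1 x ▸ hmem 0 h)
  have hsurj : Function.Surjective (traversal a b) := fun x => by
    simpa using Finset.filter_eq_empty_iff.1 hempty (Finset.mem_univ x)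
  exact hin.not_gt (lt_of_traversal_surjective ha.isMatching hb.isMatching hsurj hi hlast)

theorem IsWindingFunction.isCompatible_stepMatching (hab : IsMeander a b)
    (hθ : IsWindingFunction a b θ) (k : ℕ) :
    IsCompatible ((-1) ^ k) θ (stepMatching a b k) := by
  obtain ⟨ha, ha_nc, hb, hb_nc, -⟩ := hab
  obtain ⟨hlast, -, hθ⟩ := (isWindingFunction_iff ha hb).1 hθ
  refine ⟨ha.stepMatching hb k, by unfold stepMatching; split <;> assumption, fun x y hxy => ?_⟩
  obtain ⟨i, hi, hix⟩ := exists_traversal_eq ha hb hlast x.castSucc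
  have hi_pos : i ≠ 0 := fun h => x.castSucc_ne_last (by rw [← hix, h, traversal])
  by_cases hik : i % 2 = k % 2
  · have hy : traversal a b (i + 1) = y.castSucc := by
      rw [traversal_succ, hix, stepMatching_congr hik, hxy]
    have hin : i ≠ n := fun h => y.castSucc_ne_last
      (by rw [← hy, h, traversal_add_one_eq_last ha hb hlast])
    rw [neg_one_pow_congr (show Even k ↔ Even i by simp only [Nat.even_iff, hik])]
    exact hθ i x y (by omega) (by omega) hix hy
  · obtain ⟨j, rfl⟩ := Nat.exists_eq_succ_of_ne_zero hi_pos
    have hjk : j % 2 = k % 2 := by omega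
    have hy : traversal a b j = y.castSucc := by
      rw [← stepMatching_traversal_succ ha hb, hix, stepMatching_congr hjk, hxy]
    have hj_pos : j ≠ 0 := fun h => y.castSucc_ne_last (by rw [← hy, h, traversal])
    have hne : x ≠ y := fun h => traversal_succ_ne ha hb j (by rw [hix, hy, h])
    have hstep := hθ j y x (by omega) (by omega) hy hix
    rw [turn_swap hne] at hstep
    rw [neg_one_pow_congr (show Even k ↔ Even j by simp only [Nat.even_iff, hjk])]
    linarith

theorem isMeander_and_isWindingFunction_iff : IsMeander a b ∧ IsWindingFunction a b θ ↔
    IsCompatible (-1) θ a ∧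
      IsCompatible 1 θ b ∧ ∀ x : Fin n, b (Fin.last n) = x.castSucc → θ x = 0 := by
  constructor
  · rintro ⟨hab, hθ⟩
    have hcompatible := hθ.isCompatible_stepMatching hab
    refine ⟨by simpa [stepMatching] using hcompatible 1,
      by simpa [stepMatching] using hcompatible 0, ?_⟩
    exact ((isWindingFunction_iff hab.1 hab.2.2.1).1 hθ).2.1
  · rintro ⟨ha, hb, hθ_one⟩
    have hlast := traversal_ne_last_of_isCompatible ha hb
    have hsurj : Function.Surjective (traversal a b) := fun x =>
      (exists_traversal_eq ha.isMatching hb.isMatching hlast x).imp fun _ h => h.2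
    refine ⟨⟨ha.isMatching, ha.noncrossing, hb.isMatching, hb.noncrossing,
      meanderGraph_connected ha.isMatching hb.isMatching hsurj⟩, ?_⟩
    refine (isWindingFunction_iff ha.isMatching hb.isMatching).2 ⟨hlast, hθ_one, ?_⟩
    intro i x y _ _ hx hy
    exact (ha.stepMatching hb i).eq_add_turn x y (by rw [← hx, ← traversal_succ, hy])

end Winding

theorem card_subtype_prod {α β : Type*} {r : α × β → Prop} {p : α → Prop} {q : β → Prop}
    (h : ∀ x, r x ↔ p x.1 ∧ q x.2) :
    Nat.card {x // r x} = Nat.card {x // p x} * Nat.card {y // q y} := by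
  rw [← Nat.card_prod]
  exact Nat.card_congr ((Equiv.subtypeEquivRight h).trans Equiv.subtypeProdEquivProd)

end Meander

open Meander in
/-- **Proposition B.1 (conditional independence for uniform meanders), counting form.**
For a winding function `θ₀`, let `N(θ₀)` be the number of meanders of size `m` with
winding function `θ₀`, `N⁺(θ₀, a)` the number of those whose upper matching is `a`,
`N⁻(θ₀, b)` the number with lower matching `b`, and `N(θ₀, a, b)` the number with
upper matching `a` and lower matching `b`.  Then
`N(θ₀) · N(θ₀, a, b) = N⁺(θ₀, a) · N⁻(θ₀, b)`: conditioned on the winding function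
of a uniform meander, the upper and lower arc diagrams are conditionally
independent. -/
theorem meander_conditional_independence_counts
    (m n : ℕ) (hm : 1 ≤ m) (hn : n = 2 * m - 1)
    (θ₀ : Fin n → ℝ)
    (a b : Fin (n + 1) → Fin (n + 1))
    (ha : IsMatching a ∧ Noncrossing a) (hb : IsMatching b ∧ Noncrossing b) :
    Nat.card {p : (Fin (n + 1) → Fin (n + 1)) × (Fin (n + 1) → Fin (n + 1)) //
        IsMeander p.1 p.2 ∧ IsWindingFunction p.1 p.2 θ₀} *
      Nat.card {p : (Fin (n + 1) → Fin (n + 1)) × (Fin (n + 1) → Fin (n + 1)) //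
        IsMeander p.1 p.2 ∧ IsWindingFunction p.1 p.2 θ₀ ∧ p.1 = a ∧ p.2 = b} =
    Nat.card {p : (Fin (n + 1) → Fin (n + 1)) × (Fin (n + 1) → Fin (n + 1)) //
        IsMeander p.1 p.2 ∧ IsWindingFunction p.1 p.2 θ₀ ∧ p.1 = a} *
      Nat.card {p : (Fin (n + 1) → Fin (n + 1)) × (Fin (n + 1) → Fin (n + 1)) //
        IsMeander p.1 p.2 ∧ IsWindingFunction p.1 p.2 θ₀ ∧ p.2 = b} := by
  let upper : (Fin (n + 1) → Fin (n + 1)) → Prop := IsCompatible (-1) θ₀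
  let lower : (Fin (n + 1) → Fin (n + 1)) → Prop := fun M =>
    IsCompatible 1 θ₀ M ∧ ∀ x : Fin n, M (Fin.last n) = x.castSucc → θ₀ x = 0
  have hsplit (p : (Fin (n + 1) → Fin (n + 1)) × (Fin (n + 1) → Fin (n + 1))) :
      IsMeander p.1 p.2 ∧ IsWindingFunction p.1 p.2 θ₀ ↔ upper p.1 ∧ lower p.2 :=
    isMeander_and_isWindingFunction_iff
  rw [card_subtype_prod hsplit,
    card_subtype_prod (p := fun M => upper M ∧ M = a) (q := fun M => lower M ∧ M = b)
      fun p => by rw [← and_assoc, hsplit]; tauto,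
    card_subtype_prod (p := fun M => upper M ∧ M = a) (q := lower)
      fun p => by rw [← and_assoc, hsplit]; tauto,
    card_subtype_prod (p := upper) (q := fun M => lower M ∧ M = b)
      fun p => by rw [← and_assoc, hsplit]; tauto]
  ring
end

section
/- Let m ≥ 1 and let θ : {1, …, 2m−1} → ℝ be any function. If M⁺ ∈ A_θ⁺ and M⁻ ∈ A_θ⁻, then the graph on vertex set P with edge set M⁺ ∪ M⁻ is connected; in particular, (M⁺, M⁻) is a meander of size m. -/
namespace Meander

/-- `M ∈ A_θ⁺`: a noncrossing perfect matching such that `θ(y) = θ(x) − π` for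
every pair `{x, y}` of `M` with `x < y < ∞`. -/
def InAPlus {n : ℕ} (θ : Fin n → ℝ) (M : Fin (n + 1) → Fin (n + 1)) : Prop :=
  IsMatching M ∧ Noncrossing M ∧
    ∀ x y : Fin (n + 1), M x = y → x < y →
      ∀ (hy : (y : ℕ) < n) (hx : (x : ℕ) < n),
        θ ⟨(y : ℕ), hy⟩ = θ ⟨(x : ℕ), hx⟩ - Real.pi

/-- `M ∈ A_θ⁻`: a noncrossing perfect matching such that `θ(y) = θ(x) + π` for
every pair `{x, y}` of `M` with `x < y < ∞`. -/
def InAMinus {n : ℕ} (θ : Fin n → ℝ) (M : Fin (n + 1) → Fin (n + 1)) : Prop :=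
  IsMatching M ∧ Noncrossing M ∧
    ∀ x y : Fin (n + 1), M x = y → x < y →
      ∀ (hy : (y : ℕ) < n) (hx : (x : ℕ) < n),
        θ ⟨(y : ℕ), hy⟩ = θ ⟨(x : ℕ), hx⟩ + Real.pi

end Meander

/-!
Let `K` be the set of points not connected to `∞`; both matchings preserve it. If `K` is nonempty,
take an innermost upper arc `{a, b}` inside `K`, with `a < b`, so that `θ b = θ a - π`. The lower
matching cannot pair `a` with `b`, since it would give `θ b = θ a + π`. Deleting `a` and `b` and
joining their lower partners to each other keeps the lower diagram noncrossing, and the rise of the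
new arc from left to right is again `π`: the two lower arcs and `{a, b}` merge into a single lower
arc. This shrinks `K` but leaves it nonempty, which cannot go on forever.
-/

namespace Meander

open Function Set

/-- A noncrossing partial matching, given by its partner function: the unmatched points are the
fixed points. Allowing these lets arcs be deleted without changing the ambient point set. -/
structure IsArcSystem {n : ℕ} (M : Fin (n + 1) → Fin (n + 1)) : Prop where
  involutive : Involutive M
  noncrossing : Noncrossing M

/-- The height `θ` increases by `t` along every arc of `M`, traversed from left to right. -/
def RisesBy {n : ℕ} {A : Type*} [Add A] (θ : Fin (n + 1) → A) (t : A)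
    (M : Fin (n + 1) → Fin (n + 1)) : Prop :=
  ∀ x, x < M x → θ (M x) = θ x + t

/-- The matching obtained from `M` by unmatching two matched points `a`, `b` and joining their former
partners to each other. It need not be an involution if `a` or `b` is unmatched in `M`. -/
def contract {n : ℕ} (M : Fin (n + 1) → Fin (n + 1)) (a b x : Fin (n + 1)) : Fin (n + 1) :=
  if x = a ∨ x = b then x else if M x = a then M b else if M x = b then M a else M x

variable {n : ℕ} {M : Fin (n + 1) → Fin (n + 1)} {a b : Fin (n + 1)}

theorem isArcSystem_iff_mapsTo_uIcc :
    IsArcSystem M ↔ Involutive M ∧ ∀ x, MapsTo M (uIcc x (M x)) (uIcc x (M x)) := by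
  constructor
  · rintro ⟨hinv, hnc⟩
    refine ⟨hinv, fun x p hp ↦ ?_⟩
    have hcross (a c) (hac : a < c) (hca : c < M a) : ¬ M a < M c :=
      fun h ↦ hnc ⟨a, c, hac, hca, h⟩
    have hx := hinv x
    have hp' := hinv p
    have hright := hcross x p
    have hright' := hcross (M x) p
    have hleft := hcross (M p) x
    have hleft' := hcross (M p) (M x)
    rw [mem_uIcc] at hp ⊢
    grind
  · rintro ⟨hinv, hmaps⟩
    refine ⟨hinv, ?_⟩
    rintro ⟨x, p, hxp, hpx, hlt⟩
    have hp : M p ∈ uIcc x (M x) := hmaps x (mem_uIcc_of_le hxp.le hpx.le)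
    rw [uIcc_of_lt (hxp.trans hpx)] at hp
    exact hp.2.not_gt hlt

theorem IsArcSystem.mapsTo_uIcc (hM : IsArcSystem M) (x : Fin (n + 1)) :
    MapsTo M (uIcc x (M x)) (uIcc x (M x)) :=
  (isArcSystem_iff_mapsTo_uIcc.1 hM).2 x

theorem IsArcSystem.exists_innermost_arc (hM : IsArcSystem M) (hne : M ≠ id) :
    ∃ a, a < M a ∧ ∀ y ∈ Ioo a (M a), M y = y := by
  obtain ⟨x, hx⟩ := Function.ne_iff.1 hne
  have hright : {b | M b < b}.Nonempty := by
    rcases lt_or_gt_of_ne hx with h | h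
    · exact ⟨x, h⟩
    · exact ⟨M x, by simpa [hM.involutive x] using h⟩
  -- The leftmost right endpoint closes an innermost arc.
  obtain ⟨b, hb, hmin⟩ := WellFounded.has_min wellFounded_lt _ hright
  have hMb : M (M b) = b := hM.involutive b
  refine ⟨M b, hMb.symm ▸ hb, fun y hy ↦ ?_⟩
  rw [hMb] at hy
  have hMy : M (M y) = y := hM.involutive y
  rcases lt_trichotomy (M y) y with hlt | heq | hgt
  · exact absurd hy.2 (hmin y hlt)
  · exact heq
  · exfalso
    have hle : M y ≤ b := by
      by_contra! hlt
      exact hM.noncrossing ⟨M b, y, hy.1, hMb.symm ▸ hy.2, hMb.symm ▸ hlt⟩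
    rcases hle.lt_or_eq with hlt | heq
    · exact hmin (M y) (by simpa [hMy] using hgt) hlt
    · exact hy.1.ne (by rw [← heq, hMy])

section PiecewiseId

variable {S : Set (Fin (n + 1))} [DecidablePred (· ∈ S)]

theorem fixedPoints_piecewise_id : fixedPoints (S.piecewise id M) = S ∪ fixedPoints M := by
  ext x
  by_cases hx : x ∈ S <;> simp [hx, IsFixedPt]

theorem IsArcSystem.piecewise_id (hM : IsArcSystem M) (hS : MapsTo M S S) :
    IsArcSystem (S.piecewise id M) := by
  have hiff (x) : M x ∈ S ↔ x ∈ S := ⟨fun h ↦ hM.involutive x ▸ hS h, fun h ↦ hS h⟩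
  refine isArcSystem_iff_mapsTo_uIcc.2 ⟨fun x ↦ ?_, fun x p hp ↦ ?_⟩
  · by_cases hx : x ∈ S <;> simp [hx, hiff, hM.involutive x]
  · by_cases hx : x ∈ S
    · simp_all
    · by_cases hpS : p ∈ S
      · simpa [hpS] using hp
      · simpa [hx, hpS] using hM.mapsTo_uIcc x (by simpa [hx] using hp)

theorem RisesBy.piecewise_id {A : Type*} [Add A] {θ : Fin (n + 1) → A} {t : A}
    (hθ : ∀ x ∉ S, x < M x → θ (M x) = θ x + t) : RisesBy θ t (S.piecewise id M) := by
  intro x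
  by_cases hx : x ∈ S
  · simp [hx]
  · simpa [hx] using hθ x hx

end PiecewiseId

theorem involutive_contract (hM : Involutive M) (ha : M a ≠ a) (hb : M b ≠ b) :
    Involutive (contract M a b) := by
  intro x
  have hMMx := hM x
  have hMMa := hM a
  have hMMb := hM b
  grind [contract]

theorem fixedPoints_contract (hM : Involutive M) (hab : a ≠ b) :
    fixedPoints (contract M a b) = {a, b} ∪ fixedPoints M := by
  ext x
  have hMMa := hM a
  have hMMb := hM b
  simp only [mem_fixedPoints, IsFixedPt, mem_union, mem_insert_iff, mem_singleton_iff]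
  grind [contract]

/-- No other arc separates `a` from `b`, because nothing between them is matched; hence none
separates their partners. -/
theorem IsArcSystem.partner_mem_uIcc_iff (hM : IsArcSystem M)
    (hfix : ∀ y ∈ uIoo a b, M y = y) {x : Fin (n + 1)} (hxa : x ≠ a) (hxb : x ≠ b)
    (hMa : M x ≠ a) (hMb : M x ≠ b) :
    M a ∈ uIcc x (M x) ↔ M b ∈ uIcc x (M x) := by
  have hpartner (p) : M p ∈ uIcc x (M x) ↔ p ∈ uIcc x (M x) :=
    ⟨fun h ↦ hM.involutive p ▸ hM.mapsTo_uIcc x h, fun h ↦ hM.mapsTo_uIcc x h⟩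
  rw [hpartner, hpartner, mem_uIcc, mem_uIcc]
  have hMMx := hM.involutive x
  have hfix_left := hfix x
  have hfix_right := hfix (M x)
  simp only [uIoo, mem_Ioo, inf_lt_iff, lt_sup_iff] at hfix_left hfix_right
  grind

theorem IsArcSystem.partner_mem_uIcc_partners (hM : IsArcSystem M)
    (hfix : ∀ y ∈ uIoo a b, M y = y) {p : Fin (n + 1)} (hpa : p ≠ a) (hpb : p ≠ b)
    (hMa : M p ≠ a) (hMb : M p ≠ b) (hp : p ∈ uIcc (M a) (M b)) :
    M p ∈ uIcc (M a) (M b) := by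
  have henclose := hM.partner_mem_uIcc_iff hfix hpa hpb hMa hMb
  have hinv := hM.involutive
  have hpMa : p ≠ M a := fun h ↦ hMa (h ▸ hinv a)
  have hpMb : p ≠ M b := fun h ↦ hMb (h ▸ hinv b)
  simp only [mem_uIcc] at *
  grind

theorem IsArcSystem.contract (hM : IsArcSystem M) (ha : M a ≠ a) (hb : M b ≠ b)
    (hfix : ∀ y ∈ uIoo a b, M y = y) : IsArcSystem (contract M a b) := by
  have hinv := hM.involutive
  have hpartner {x y} : M x = y ↔ x = M y := hinv.eq_iff
  refine isArcSystem_iff_mapsTo_uIcc.2 ⟨involutive_contract hinv ha hb, fun x p hp ↦ ?_⟩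
  have henclose := hM.partner_mem_uIcc_iff hfix (x := x)
  have hjoin := hM.partner_mem_uIcc_partners hfix (p := p)
  have hkept : p ∈ uIcc x (M x) → M p ∈ uIcc x (M x) := fun h ↦ hM.mapsTo_uIcc x h
  grind [Meander.contract, uIcc_comm, left_mem_uIcc, right_mem_uIcc, uIcc_self]

theorem partner_notMem_uIcc (hM : Involutive M) (ha : M a ≠ a) (hab : M a ≠ b)
    (hfix : ∀ y ∈ uIoo a b, M y = y) : M a ∉ uIcc a b := by
  intro hmem
  have hfixMa := hfix (M a)
  rw [hM a] at hfixMa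
  rw [mem_uIcc] at hmem
  simp only [uIoo, mem_Ioo, inf_lt_iff, lt_sup_iff] at hfixMa
  grind

section Rises

variable {A : Type*} [AddCommGroup A] {θ : Fin (n + 1) → A} {t : A}

theorem RisesBy.apply_ne (hθ : RisesBy θ t M) (ht : t + t ≠ 0) (hab : a < b)
    (hdrop : θ b = θ a - t) : M a ≠ b :=
  fun h ↦ ht <| calc
    t + t = (θ a + t) - (θ a - t) := by abel
    _ = 0 := by rw [← hθ a (h ▸ hab), h, hdrop, sub_self]

theorem RisesBy.rise_between_partners (hM : IsArcSystem M) (hθ : RisesBy θ t M) (hab : a < b)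
    (hdrop : θ b = θ a - t) (ha : M a ∉ uIcc a b) (hb : M b ∉ uIcc a b) :
    (M a < M b → θ (M b) = θ (M a) + t) ∧ (M b < M a → θ (M a) = θ (M b) + t) := by
  have hMMa : M (M a) = a := hM.involutive a
  have hMMb : M (M b) = b := hM.involutive b
  have hnc (x y) (hxy : x < y) (hyx : y < M x) : ¬ M x < M y :=
    fun h ↦ hM.noncrossing ⟨x, y, hxy, hyx, h⟩
  -- Noncrossing leaves three arrangements: `M a < a < b < M b`, `M b < M a < a < b` and
  -- `a < b < M b < M a`.
  have hab_right : b < M a → ¬ M a < M b := hnc a b hab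
  have hab_left : M a < M b → M b < a → False := fun h₁ h₂ ↦ by
    simpa [hMMa, hMMb, h₂, hab] using hnc (M a) (M b) h₁
  have hab_outward : M b < a → ¬ b < M a := fun h ↦ by
    simpa [hMMb, hab] using hnc (M b) a h
  have hθMa := hθ (M a)
  have hθMb := hθ (M b)
  rw [hMMa] at hθMa
  rw [hMMb] at hθMb
  have hθa := hθ a
  have hθb := hθ b
  rw [uIcc_of_lt hab, mem_Icc] at ha hb
  grind

theorem RisesBy.contract (hM : IsArcSystem M) (hθ : RisesBy θ t M) (hab : a < b)
    (hdrop : θ b = θ a - t) (ha : M a ∉ uIcc a b) (hb : M b ∉ uIcc a b) :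
    RisesBy θ t (contract M a b) := by
  intro x hx
  have hpartner {x y} : M x = y ↔ x = M y := hM.involutive.eq_iff
  have hpartners := hθ.rise_between_partners hM hab hdrop ha hb
  have hθx := hθ x
  grind [Meander.contract]

theorem IsArcSystem.eq_id_of_risesBy (ht : t + t ≠ 0) {f g : Fin (n + 1) → Fin (n + 1)}
    (hf : IsArcSystem f) (hg : IsArcSystem g) (hfg : fixedPoints f = fixedPoints g)
    (hfθ : RisesBy θ (-t) f) (hgθ : RisesBy θ t g) : f = id := by
  classical
  induction hF : fixedPoints f using WellFoundedGT.induction generalizing f g with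
  | ind F ih =>
  subst hF
  by_contra hne
  obtain ⟨a, hab, hinner⟩ := hf.exists_innermost_arc hne
  set b := f a with hb
  have hfb : f b = a := hf.involutive a
  have hfix (x) : f x = x ↔ g x = x := Set.ext_iff.1 hfg x
  have hga : g a ≠ a := fun h ↦ hab.ne' ((hfix a).2 h)
  have hgb : g b ≠ b := fun h ↦ hab.ne (hfb.symm.trans ((hfix b).2 h))
  have hginner : ∀ y ∈ uIoo a b, g y = y := by
    rw [uIoo_of_lt hab]
    exact fun y hy ↦ (hfix y).1 (hinner y hy)
  have hdrop : θ b = θ a - t := by rw [hfθ a hab, sub_eq_add_neg]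
  have hgab : g a ≠ b := hgθ.apply_ne ht hab hdrop
  have hgba : g b ≠ a := fun h ↦ hgab (hg.involutive.eq_iff.1 h).symm
  have hga_out := partner_notMem_uIcc hg.involutive hga hgab hginner
  have hgb_out := partner_notMem_uIcc hg.involutive hgb hgba (uIoo_comm a b ▸ hginner)
  rw [uIcc_comm] at hgb_out
  have hS : MapsTo f {a, b} {a, b} := by rintro x (rfl | rfl) <;> simp [hfb, ← hb]
  have hfixS : fixedPoints (({a, b} : Set _).piecewise id f) = {a, b} ∪ fixedPoints f :=
    fixedPoints_piecewise_id
  have hlt : fixedPoints f < {a, b} ∪ fixedPoints f := by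
    refine lt_of_le_of_ne subset_union_right fun h ↦ hab.ne' (?_ : a ∈ fixedPoints f)
    rw [h]
    exact .inl (.inl rfl)
  have hid := ih _ hlt (hf.piecewise_id hS) (hg.contract hga hgb hginner)
    (by rw [hfixS, fixedPoints_contract hg.involutive hab.ne, hfg])
    (RisesBy.piecewise_id fun x _ ↦ hfθ x) (hgθ.contract hg hab hdrop hga_out hgb_out) hfixS
  have hga_notMem : g a ∉ ({a, b} : Set _) := by simp [hga, hgab]
  have hfga : f (g a) = g a := by simpa [hga_notMem] using congrFun hid (g a)
  exact hga (((hfix _).1 hfga).symm.trans (hg.involutive a))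

theorem RisesBy.snoc_piecewise_id {θ : Fin n → A} {S : Set (Fin (n + 1))}
    [DecidablePred (· ∈ S)] (hM : Involutive M) (hS : MapsTo M S S) (hlast : Fin.last n ∈ S)
    (hθ : ∀ x y : Fin n, x < y → M x.castSucc = y.castSucc → θ y = θ x + t) :
    RisesBy (Fin.snoc (α := fun _ ↦ A) θ 0) t (S.piecewise id M) := by
  refine RisesBy.piecewise_id fun x hx hlt ↦ ?_
  have hMx : M x ∉ S := fun h ↦ hx (hM x ▸ hS h)
  obtain ⟨x', hx'⟩ := Fin.exists_castSucc_eq.2 (fun h ↦ hx (h ▸ hlast) : x ≠ Fin.last n)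
  obtain ⟨y', hy'⟩ := Fin.exists_castSucc_eq.2 (fun h ↦ hMx (h ▸ hlast) : M x ≠ Fin.last n)
  subst hx'
  rw [← hy', Fin.snoc_castSucc, Fin.snoc_castSucc]
  rw [← hy'] at hlt
  exact hθ x' y' hlt hy'.symm

end Rises

theorem IsMatching.fixedPoints_eq_empty (hM : IsMatching M) : fixedPoints M = ∅ :=
  eq_empty_of_forall_notMem hM.2

theorem meanderGraph_reachable_upper (Mp Mm : Fin (n + 1) → Fin (n + 1)) (x : Fin (n + 1)) :
    (meanderGraph Mp Mm).Reachable x (Mp x) := by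
  by_cases h : x = Mp x
  · rw [← h]
  · exact SimpleGraph.Adj.reachable ⟨h, .inl (.inl rfl)⟩

theorem meanderGraph_reachable_lower (Mp Mm : Fin (n + 1) → Fin (n + 1)) (x : Fin (n + 1)) :
    (meanderGraph Mp Mm).Reachable x (Mm x) := by
  by_cases h : x = Mm x
  · rw [← h]
  · exact SimpleGraph.Adj.reachable ⟨h, .inl (.inr rfl)⟩

end Meander

open Meander in
theorem arcSets_pair_connected_general {n : ℕ} {A : Type*} [AddCommGroup A]
    {θ : Fin n → A} {t : A} (ht : t + t ≠ 0) {Mp Mm : Fin (n + 1) → Fin (n + 1)}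
    (hp : IsMatching Mp) (hp_nc : Noncrossing Mp) (hm : IsMatching Mm) (hm_nc : Noncrossing Mm)
    (hpθ : ∀ x y : Fin n, x < y → Mp x.castSucc = y.castSucc → θ y = θ x - t)
    (hmθ : ∀ x y : Fin n, x < y → Mm x.castSucc = y.castSucc → θ y = θ x + t) :
    IsMeander Mp Mm := by
  classical
  let S : Set (Fin (n + 1)) := {x | (meanderGraph Mp Mm).Reachable (Fin.last n) x}
  have hlast : Fin.last n ∈ S := .refl _
  have hpS : Set.MapsTo Mp S S := fun x hx ↦ hx.trans (meanderGraph_reachable_upper Mp Mm x)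
  have hmS : Set.MapsTo Mm S S := fun x hx ↦ hx.trans (meanderGraph_reachable_lower Mp Mm x)
  have hid : S.piecewise id Mp = id :=
    IsArcSystem.eq_id_of_risesBy ht
      (IsArcSystem.piecewise_id ⟨hp.1, hp_nc⟩ hpS) (IsArcSystem.piecewise_id ⟨hm.1, hm_nc⟩ hmS)
      (by simp only [fixedPoints_piecewise_id, hp.fixedPoints_eq_empty, hm.fixedPoints_eq_empty])
      (.snoc_piecewise_id hp.1 hpS hlast (by simpa only [sub_eq_add_neg] using hpθ))
      (.snoc_piecewise_id hm.1 hmS hlast hmθ)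
  have hreach (x) : x ∈ S := by
    by_contra hx
    exact hp.2 x (by simpa [hx] using congrFun hid x)
  exact ⟨hp, hp_nc, hm, hm_nc, ⟨fun x y ↦ (hreach x).symm.trans (hreach y)⟩⟩

open Meander in
/-- **Connectedness of pairs of compatible arc diagrams.** If `M⁺ ∈ A_θ⁺` and
`M⁻ ∈ A_θ⁻` for any function `θ`, then the graph with edge set `M⁺ ∪ M⁻` is
connected; in particular `(M⁺, M⁻)` is a meander of size `m`. -/
theorem arcSets_pair_connected
    (m n : ℕ) (hm : 1 ≤ m) (hn : n = 2 * m - 1)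
    (θ : Fin n → ℝ)
    (Mp Mm : Fin (n + 1) → Fin (n + 1))
    (hp : InAPlus θ Mp) (hq : InAMinus θ Mm) :
    (meanderGraph Mp Mm).Connected ∧ IsMeander Mp Mm := by
  have hmeander : IsMeander Mp Mm :=
    arcSets_pair_connected_general (add_pos Real.pi_pos Real.pi_pos).ne' hp.1 hp.2.1 hq.1 hq.2.1
      (fun x y hxy h ↦ hp.2.2 _ _ h hxy y.2 x.2) (fun x y hxy h ↦ hq.2.2 _ _ h hxy y.2 x.2)
  exact ⟨hmeander.2.2.2.2, hmeander⟩
end
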